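/- arXiv:1904.01656 — 2 statements merged into one kernel-verified Lean document; each statement's English description precedes it below -/
import Mathlib

section
/- The sum over all partitions λ of n of (f^λ)² equals n!. -/
/-!
Young's lattice is a differential poset, and the identity follows from that structure. Write
`f^μ` for the number of standard Young tableaux of shape `μ`. Deleting the largest entry of a
tableau gives the branching rule `f^ν = ∑ f^μ` over the diagrams `μ` obtained from `ν` by removing
one cell (`fnum_eq_sum`).

For two diagrams `μ, ν` with the same number of cells, the number of diagrams covering both equals
the number of diagrams covered by both, plus one if `μ = ν` (`card_common_up`). For `μ ≠ ν` both
numbers are `0` or `1`, the candidates being `μ ⊔ ν` and `μ ⊓ ν`; for `μ = ν` a cell can be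
appended to row `0` and to each row just after one that ends in a removable cell.

By induction these two facts give the upward rule `∑ f^ν = (|μ| + 1) f^μ` over the diagrams `ν`
covering `μ` (`sum_up`). Expanding one factor of `(f^ν)²` by the branching rule and exchanging
the sums then turns the sum of squares for `n + 1` into `n + 1` times the sum for `n`.
-/

/-- The cells of the Young diagram of a partition `p ⊢ n`:
`(i, j)` (0-indexed) is a cell iff `i` is less than the number of parts of `p`
exceeding `j`. -/
def cellsOf {n : ℕ} (p : Nat.Partition n) : Finset (ℕ × ℕ) :=
  (Finset.range n ×ˢ Finset.range n).filter
    fun c => c.1 < (p.parts.filter fun a => c.2 < a).card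

/-- `sytCount p` is the number `f^p` of standard Young tableaux of shape `p ⊢ n`:
bijective fillings of the cells of `p` by `{0,…,n-1}`, strictly increasing along
rows and columns. -/
noncomputable def sytCount {n : ℕ} (p : Nat.Partition n) : ℕ :=
  Nat.card {T : cellsOf p → Fin n //
    Function.Bijective T ∧
    (∀ c d : cellsOf p, c.1.1 = d.1.1 → c.1.2 < d.1.2 → T c < T d) ∧
    (∀ c d : cellsOf p, c.1.2 = d.1.2 → c.1.1 < d.1.1 → T c < T d)}

/-! ### Partitions and Young diagrams -/

/-- `#{a ∈ s | j < a}`, summed over `j < n`, gives the sum of `s` when every part is at most `n`. -/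
theorem sum_card_filter_lt (s : Multiset ℕ) (n : ℕ) (h : ∀ a ∈ s, a ≤ n) :
    ∑ j ∈ Finset.range n, (s.filter fun a => j < a).card = s.sum := by
  induction s using Multiset.induction_on with
  | empty => simp
  | cons a s ih =>
    have ha : a ≤ n := h a (by simp)
    have h1 : ∀ j, ((a ::ₘ s).filter fun b => j < b).card
        = (if j < a then 1 else 0) + (s.filter fun b => j < b).card := by
      intro j
      by_cases hj : j < a <;> simp [hj, add_comm]
    simp only [h1, Finset.sum_add_distrib]
    rw [ih fun b hb => h b (by simp [hb]), Multiset.sum_cons]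
    congr 1
    rw [← Finset.card_filter]
    have : (Finset.range n).filter (fun j => j < a) = Finset.range a := by
      ext j; simp; omega
    simp [this]

theorem le_of_mem_parts {n : ℕ} (p : Nat.Partition n) {a : ℕ} (ha : a ∈ p.parts) : a ≤ n := by
  have := Multiset.single_le_sum (s := p.parts) (fun _ _ => Nat.zero_le _) a ha
  rwa [p.parts_sum] at this

theorem card_parts_le {n : ℕ} (p : Nat.Partition n) : p.parts.card ≤ n := by
  have h := Multiset.card_nsmul_le_sum (s := p.parts) (a := 1) (fun x hx => p.parts_pos hx)
  rw [p.parts_sum] at h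
  simpa using h

/-- The bounding box in `cellsOf` is harmless. -/
theorem mem_cellsOf {n : ℕ} (p : Nat.Partition n) (c : ℕ × ℕ) :
    c ∈ cellsOf p ↔ c.1 < (p.parts.filter fun a => c.2 < a).card := by
  simp only [cellsOf, Finset.mem_filter, Finset.mem_product, Finset.mem_range, and_iff_right_iff_imp]
  intro h
  constructor
  · exact h.trans_le ((Multiset.card_le_card (Multiset.filter_le _ _)).trans (card_parts_le p))
  · obtain ⟨a, ha⟩ := Multiset.card_pos_iff_exists_mem.1 (Nat.zero_lt_of_lt h)
    rw [Multiset.mem_filter] at ha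
    exact ha.2.trans_le (le_of_mem_parts p ha.1)

/-- `cellsOf p` as a Young diagram. -/
def diagramOf {n : ℕ} (p : Nat.Partition n) : YoungDiagram where
  cells := cellsOf p
  isLowerSet := by
    intro c d hdc hc
    simp only [Finset.mem_coe, mem_cellsOf] at hc ⊢
    refine (hdc.1.trans_lt hc).trans_le (Multiset.card_le_card ?_)
    exact Multiset.monotone_filter_right _ fun a ha => hdc.2.trans_lt ha

theorem mem_diagramOf {n : ℕ} (p : Nat.Partition n) (c : ℕ × ℕ) :
    c ∈ diagramOf p ↔ c.1 < (p.parts.filter fun a => c.2 < a).card :=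
  mem_cellsOf p c

theorem card_diagramOf {n : ℕ} (p : Nat.Partition n) : (diagramOf p).card = n := by
  change (cellsOf p).card = n
  have h : (cellsOf p).card
      = ∑ j ∈ Finset.range n, (p.parts.filter fun a => j < a).card := by
    rw [Finset.card_eq_sum_card_fiberwise (f := Prod.snd) (t := Finset.range n)]
    · refine Finset.sum_congr rfl fun j _ => ?_
      have : (cellsOf p).filter (fun c => c.2 = j)
          = Finset.range (p.parts.filter fun a => j < a).card ×ˢ {j} := by
        ext ⟨a, b⟩
        simp only [Finset.mem_filter, mem_cellsOf, Finset.mem_product, Finset.mem_range,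
          Finset.mem_singleton]
        constructor
        · rintro ⟨h, rfl⟩; exact ⟨h, rfl⟩
        · rintro ⟨h, rfl⟩; exact ⟨h, rfl⟩
      rw [this]; simp
    · intro c hc
      simp only [cellsOf, Finset.coe_filter, Finset.mem_product, Set.mem_ofPred_eq] at hc
      simpa using hc.1.2
  rw [h, sum_card_filter_lt _ _ fun a ha => le_of_mem_parts p ha, p.parts_sum]

theorem diagramOf_injective (n : ℕ) :
    Function.Injective (diagramOf : Nat.Partition n → YoungDiagram) := by
  intro p q h
  have key : ∀ j, (p.parts.filter fun a => j < a).card = (q.parts.filter fun a => j < a).card := by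
    intro j
    refine eq_of_forall_lt_iff fun i => ?_
    rw [← mem_diagramOf p (i, j), ← mem_diagramOf q (i, j), h]
  have split : ∀ (s : Multiset ℕ) (a : ℕ), (s.filter fun b => a < b).card + s.count (a + 1)
      = (s.filter fun b => a + 1 < b).card + 2 * s.count (a + 1) := by
    intro s a
    have : (s.filter fun b => a < b).card = (s.filter fun b => a + 1 < b).card
        + s.count (a + 1) := by
      induction s using Multiset.induction_on with
      | empty => simp
      | cons x s ih =>
        simp only [Multiset.filter_cons, Multiset.count_cons, Multiset.card_add, ih]
        split_ifs <;> simp <;> omega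
    omega
  apply Nat.Partition.ext
  refine Multiset.ext.2 fun a => ?_
  rcases a with _ | a
  · rw [Multiset.count_eq_zero_of_notMem fun h => absurd (p.parts_pos h) (by simp),
      Multiset.count_eq_zero_of_notMem fun h => absurd (q.parts_pos h) (by simp)]
  · have h1 := split p.parts a
    have h2 := split q.parts a
    rw [key, key] at h1
    omega

theorem exists_diagramOf (μ : YoungDiagram) : ∃ p : Nat.Partition μ.card, diagramOf p = μ := by
  set s : Multiset ℕ := (μ.rowLens : Multiset ℕ) with hs
  have hcard : ∀ j, (s.filter fun a => j < a).card = μ.colLen j := by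
    intro j
    have h1 : s = (Multiset.range (μ.colLen 0)).map μ.rowLen := rfl
    rw [h1, Multiset.filter_map, Multiset.card_map]
    have h2 : ((Finset.range (μ.colLen 0)).filter (fun i => j < μ.rowLen i))
        = Finset.range (μ.colLen j) := by
      ext i
      simp only [Finset.mem_filter, Finset.mem_range, ← YoungDiagram.mem_iff_lt_rowLen,
        ← YoungDiagram.mem_iff_lt_colLen]
      exact ⟨fun h => h.2, fun h => ⟨μ.up_left_mem le_rfl (Nat.zero_le _) h, h⟩⟩
    have h3 := congrArg Finset.card h2
    rw [Finset.card_range] at h3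
    exact h3
  have hsum : s.sum = μ.card := by
    have h1 : s.sum = ∑ i ∈ Finset.range (μ.colLen 0), μ.rowLen i := rfl
    rw [h1, YoungDiagram.card, Finset.card_eq_sum_card_fiberwise (f := Prod.fst)
      (t := Finset.range (μ.colLen 0))]
    · exact Finset.sum_congr rfl fun i _ => μ.rowLen_eq_card
    · rintro ⟨i, j⟩ hc
      have hc' : (i, j) ∈ μ := hc
      simpa [← YoungDiagram.mem_iff_lt_colLen] using μ.up_left_mem le_rfl (Nat.zero_le _) hc'
  refine ⟨⟨s, fun {i} hi => μ.pos_of_mem_rowLens i hi, hsum⟩, ?_⟩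
  ext ⟨i, j⟩
  rw [YoungDiagram.mem_cells, YoungDiagram.mem_cells, mem_diagramOf]
  change i < (s.filter fun a => j < a).card ↔ _
  rw [hcard, YoungDiagram.mem_iff_lt_colLen]

open Classical in
/-- The finite set of Young diagrams with `n` cells. -/
noncomputable def diagrams (n : ℕ) : Finset YoungDiagram :=
  Finset.univ.image (diagramOf : Nat.Partition n → YoungDiagram)

theorem mem_diagrams {n : ℕ} {μ : YoungDiagram} : μ ∈ diagrams n ↔ μ.card = n := by
  simp only [diagrams, Finset.mem_image, Finset.mem_univ, true_and]
  constructor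
  · rintro ⟨p, rfl⟩; exact card_diagramOf p
  · rintro rfl; exact exists_diagramOf μ

/-! ### Standard Young tableaux and the branching rule -/

/-- Standard Young tableaux of shape `μ`, encoded as functions on all of `ℕ × ℕ` with entries
`1, …, |μ|` on `μ` and the value `0` off `μ`. -/
abbrev SYT (μ : YoungDiagram) : Type :=
  {T : ℕ × ℕ → ℕ // (∀ c, c ∉ μ → T c = 0) ∧ (∀ c ∈ μ, 1 ≤ T c ∧ T c ≤ μ.card) ∧
    Set.InjOn T (μ : Set (ℕ × ℕ)) ∧ StrictMonoOn T (μ : Set (ℕ × ℕ))}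

theorem SYT.finite (μ : YoungDiagram) : Finite (SYT μ) := by
  refine Finite.of_injective (β := μ.cells → Fin (μ.card + 1))
    (fun T c => ⟨T.1 c.1, Nat.lt_succ_of_le (T.2.2.1 c.1 c.2).2⟩) ?_
  intro S T h
  apply Subtype.ext
  funext c
  by_cases hc : c ∈ μ
  · exact Fin.mk.inj_iff.1 (congrFun h ⟨c, hc⟩)
  · rw [S.2.1 c hc, T.2.1 c hc]

/-- The number `f^μ` of standard Young tableaux of shape `μ`. -/
noncomputable def fnum (μ : YoungDiagram) : ℕ := Nat.card (SYT μ)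

/-- Strict growth along rows and columns is strict monotonicity for the product order,
since a diagram contains the corner `(d.1, c.2)` whenever `c ≤ d` and `d` lies in it. -/
theorem strictMonoOn_of_rows_cols (μ : YoungDiagram) (T : ℕ × ℕ → ℕ)
    (hr : ∀ i j j', (i, j') ∈ μ → j < j' → T (i, j) < T (i, j'))
    (hc : ∀ i i' j, (i', j) ∈ μ → i < i' → T (i, j) < T (i', j)) :
    StrictMonoOn T (μ : Set (ℕ × ℕ)) := by
  rintro ⟨i, j⟩ _ ⟨i', j'⟩ hd hlt
  have hd : (i', j') ∈ μ := hd
  obtain ⟨h1, h2⟩ := Prod.mk_le_mk.1 hlt.le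
  rcases h1.lt_or_eq with h1 | rfl
  · have h3 := hc i i' j (μ.up_left_mem le_rfl h2 hd) h1
    rcases h2.lt_or_eq with h2 | rfl
    · exact h3.trans (hr i' j j' hd h2)
    · exact h3
  · rcases h2.lt_or_eq with h2 | rfl
    · exact hr i j j' hd h2
    · exact absurd hlt (lt_irrefl _)

theorem sytCount_eq {n : ℕ} (p : Nat.Partition n) : sytCount p = fnum (diagramOf p) := by
  have hmem : ∀ c, c ∈ diagramOf p ↔ c ∈ cellsOf p := fun c => Iff.rfl
  have hcard := card_diagramOf p
  refine Nat.card_eq_of_bijective (fun T => ⟨fun c =>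
    if h : c ∈ cellsOf p then (T.1 ⟨c, h⟩ : ℕ) + 1 else 0, ?_, ?_, ?_, ?_⟩) ⟨?_, ?_⟩
  · intro c hc
    exact dif_neg hc
  · intro c hc
    simp only
    rw [dif_pos ((hmem c).1 hc), hcard]
    exact ⟨Nat.le_add_left _ _, (T.1 _).2⟩
  · intro c hc d hd h
    simp only at h
    rw [dif_pos (show c ∈ cellsOf p from hc), dif_pos (show d ∈ cellsOf p from hd)] at h
    have := T.2.1.1 (Fin.ext (Nat.succ_injective h))
    exact congrArg Subtype.val this
  · apply strictMonoOn_of_rows_cols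
    · intro i j j' hd hj
      have hc : (i, j) ∈ cellsOf p := (diagramOf p).up_left_mem le_rfl hj.le hd
      rw [dif_pos hc, dif_pos ((hmem _).1 hd)]
      exact Nat.succ_lt_succ (T.2.2.1 ⟨_, hc⟩ ⟨_, hd⟩ rfl hj)
    · intro i i' j hd hi
      have hc : (i, j) ∈ cellsOf p := (diagramOf p).up_left_mem hi.le le_rfl hd
      rw [dif_pos hc, dif_pos ((hmem _).1 hd)]
      exact Nat.succ_lt_succ (T.2.2.2 ⟨_, hc⟩ ⟨_, hd⟩ rfl hi)
  · intro S T h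
    apply Subtype.ext
    funext c
    have := congrFun (congrArg Subtype.val h) c.1
    simp only [dif_pos c.2] at this
    exact Fin.ext (Nat.succ_injective this)
  · rintro ⟨T, h0, hT, hinj, hmono⟩
    rw [hcard] at hT
    have hb : ∀ c : cellsOf p, T c.1 - 1 < n := fun c => by
      have := hT c.1 c.2
      omega
    refine ⟨⟨fun c => ⟨T c.1 - 1, hb c⟩, ?_, ?_, ?_⟩, ?_⟩
    · rw [Fintype.bijective_iff_injective_and_card]
      refine ⟨fun c d h => ?_, ?_⟩
      · have h1 := Fin.mk.inj_iff.1 h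
        have hc := hT c.1 c.2
        have hd := hT d.1 d.2
        exact Subtype.ext (hinj c.2 d.2 (by omega))
      · rw [Fintype.card_coe, Fintype.card_fin]
        exact hcard
    · intro c d h1 h2
      have := hmono c.2 d.2 (Prod.lt_iff.2 (Or.inr ⟨h1.le, h2⟩))
      have hc := hT c.1 c.2
      rw [Fin.mk_lt_mk]; omega
    · intro c d h1 h2
      have := hmono c.2 d.2 (Prod.lt_iff.2 (Or.inl ⟨h2, h1.le⟩))
      have hc := hT c.1 c.2
      rw [Fin.mk_lt_mk]; omega
    · apply Subtype.ext
      funext c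
      by_cases hc : c ∈ cellsOf p
      · simp only [dif_pos hc]
        have := hT c hc
        omega
      · simp only [dif_neg hc]
        exact (h0 c hc).symm

open Classical in
/-- Branching rule: deleting the largest entry of a tableau of shape `ν` leaves a tableau on a
diagram with one cell fewer. -/
theorem fnum_eq_sum {n : ℕ} {ν : YoungDiagram} (hν : ν.card = n + 1) :
    fnum ν = ∑ μ ∈ (diagrams n).filter (· ≤ ν), fnum μ := by
  rw [← Finset.sum_coe_sort]
  have : ∀ μ, Finite (SYT μ) := SYT.finite
  unfold fnum
  rw [← Nat.card_sigma]
  symm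
  have hμ : ∀ μ : {x // x ∈ (diagrams n).filter (· ≤ ν)}, μ.1.card = n ∧ μ.1 ≤ ν := fun μ => by
    have h := Finset.mem_filter.1 μ.2
    exact ⟨mem_diagrams.1 h.1, h.2⟩
  have hS : ∀ μ : {x // x ∈ (diagrams n).filter (· ≤ ν)}, ∀ S : SYT μ.1, ∀ c ∈ μ.1,
      1 ≤ S.1 c ∧ S.1 c ≤ n := fun μ S c hc =>
    ⟨(S.2.2.1 c hc).1, (S.2.2.1 c hc).2.trans_eq (hμ μ).1⟩
  have hone : ∀ μ : {x // x ∈ (diagrams n).filter (· ≤ ν)}, ∀ c ∈ ν, ∀ d ∈ ν,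
      c ∉ μ.1 → d ∉ μ.1 → c = d := by
    intro μ c hc d hd hc' hd'
    have h1 : (ν.cells \ μ.1.cells).card = 1 := by
      rw [Finset.card_sdiff_of_subset (YoungDiagram.cells_subset_iff.2 (hμ μ).2)]
      have h2 := (hμ μ).1
      change ν.cells.card = n + 1 at hν
      change μ.1.cells.card = n at h2
      omega
    exact Finset.card_le_one.1 h1.le c (by simp [hc, hc']) d (by simp [hd, hd'])
  refine Nat.card_eq_of_bijective (fun x => ⟨fun c =>
    if c ∈ ν ∧ c ∉ x.1.1 then n + 1 else x.2.1 c, ?_, ?_, ?_, ?_⟩) ⟨?_, ?_⟩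
  · intro c hc
    simp only
    rw [if_neg fun h => hc h.1]
    exact x.2.2.1 c fun h => hc ((hμ x.1).2 h)
  · intro c hc
    simp only [hν]
    split_ifs with h
    · omega
    · have h1 := hS x.1 x.2 c (by tauto)
      omega
  · intro c hc d hd h
    have hc : c ∈ ν := hc
    have hd : d ∈ ν := hd
    have hb := fun c hc => (hS x.1 x.2 c hc).2
    by_cases h1 : c ∈ x.1.1 <;> by_cases h2 : d ∈ x.1.1 <;> simp [hc, hd, h1, h2] at h
    · exact x.2.2.2.2.1 h1 h2 h
    · have := hb c h1
      omega
    · have := hb d h2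
      omega
    · exact hone x.1 c hc d hd h1 h2
  · intro c hc d hd h
    have hc : c ∈ ν := hc
    have hd : d ∈ ν := hd
    have hb := fun c hc => (hS x.1 x.2 c hc).2
    by_cases h2 : d ∈ x.1.1
    · have h1 : c ∈ x.1.1 := x.1.1.isLowerSet h.le h2
      simp only [h1, h2, not_true, and_false, if_false]
      exact x.2.2.2.2.2 h1 h2 h
    · have h1 : c ∈ x.1.1 := by
        by_contra h1
        exact h.ne (hone x.1 c hc d hd h1 h2)
      have := hb c h1
      simp only [h1, h2, hd, not_true, and_false, if_false, not_false_eq_true, and_self, if_true]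
      omega
  · -- the smaller diagram is the set of cells with entries in `1, …, n`
    have hrec : ∀ x : (μ : {x // x ∈ (diagrams n).filter (· ≤ ν)}) × SYT μ.1, ∀ c,
        c ∈ x.1.1 ↔ 1 ≤ (if c ∈ ν ∧ c ∉ x.1.1 then n + 1 else x.2.1 c) ∧
          (if c ∈ ν ∧ c ∉ x.1.1 then n + 1 else x.2.1 c) ≤ n := by
      intro x c
      by_cases hc : c ∈ x.1.1
      · have := hS x.1 x.2 c hc
        simp [hc, this]
      · have := x.2.2.1 c hc
        by_cases hc' : c ∈ ν <;> simp [hc, hc', this]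
    rintro ⟨μ, S⟩ ⟨κ, T⟩ h
    have h' := fun c => congrFun (congrArg Subtype.val h) c
    simp only at h'
    have hμκ : μ = κ := by
      apply Subtype.ext
      apply SetLike.ext
      intro c
      have h1 := hrec ⟨μ, S⟩ c
      have h2 := hrec ⟨κ, T⟩ c
      simp only at h1 h2
      rw [h1, h2, h' c]
    subst hμκ
    congr 1
    apply Subtype.ext
    funext c
    by_cases hc : c ∈ μ.1
    · simpa [hc] using h' c
    · rw [S.2.1 c hc, T.2.1 c hc]
  · rintro ⟨T, h0, hT, hinj, hmono⟩
    rw [hν] at hT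
    let μ : YoungDiagram :=
      { cells := ν.cells.filter fun c => T c ≤ n
        isLowerSet := by
          intro c d hdc hc
          simp only [Finset.coe_filter, YoungDiagram.mem_cells, Set.mem_ofPred_eq] at hc ⊢
          have hd : d ∈ ν := ν.isLowerSet hdc hc.1
          exact ⟨hd, (hmono.monotoneOn hd hc.1 hdc).trans hc.2⟩ }
    have hmem : ∀ c, c ∈ μ ↔ c ∈ ν ∧ T c ≤ n := fun c => by
      rw [← YoungDiagram.mem_cells]
      simp [μ]
    have himg : ν.cells.image T = Finset.Icc 1 (n + 1) := by
      apply Finset.eq_of_subset_of_card_le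
      · intro k hk
        obtain ⟨c, hc, rfl⟩ := Finset.mem_image.1 hk
        exact Finset.mem_Icc.2 (hT c hc)
      · rw [Finset.card_image_of_injOn hinj]
        simpa using hν.ge
    have hcard : μ.card = n := by
      have h1 : μ.cells.image T = Finset.Icc 1 n := by
        ext k
        have h2 : k ∈ ν.cells.image T ↔ k ∈ Finset.Icc 1 (n + 1) := by rw [himg]
        simp only [Finset.mem_image, YoungDiagram.mem_cells, Finset.mem_Icc, hmem] at h2 ⊢
        constructor
        · rintro ⟨c, ⟨hc, hn⟩, rfl⟩
          exact ⟨(hT c hc).1, hn⟩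
        · rintro ⟨hk1, hk2⟩
          obtain ⟨c, hc, rfl⟩ := h2.2 ⟨hk1, by omega⟩
          exact ⟨c, ⟨hc, hk2⟩, rfl⟩
      have h2 := congrArg Finset.card h1
      rw [Finset.card_image_of_injOn (hinj.mono fun c hc => ((hmem c).1 hc).1)] at h2
      simpa using h2
    have hle : μ ≤ ν := fun c hc => ((hmem c).1 hc).1
    refine ⟨⟨⟨μ, by simp [mem_diagrams, hcard, hle]⟩,
      ⟨fun c => if c ∈ μ then T c else 0, ?_, ?_, ?_, ?_⟩⟩, ?_⟩
    · intro c hc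
      exact if_neg hc
    · intro c hc
      have hc' := (hmem c).1 hc
      simp only
      rw [if_pos hc, hcard]
      exact ⟨(hT c hc'.1).1, hc'.2⟩
    · intro c hc d hd h
      have hc : c ∈ μ := hc
      have hd : d ∈ μ := hd
      simp only [hc, hd, if_true] at h
      exact hinj (hle hc) (hle hd) h
    · intro c hc d hd h
      have hc : c ∈ μ := hc
      have hd : d ∈ μ := hd
      simp only [hc, hd, if_true]
      exact hmono (hle hc) (hle hd) h
    · apply Subtype.ext
      funext c
      simp only
      by_cases hc : c ∈ μ
      · simp [hc]
      · by_cases hc' : c ∈ ν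
        · have h1 := hT c hc'
          have h2 := mt (hmem c).2 hc
          simp only [hc, hc', not_false_eq_true, and_self, if_true]
          have : ¬ T c ≤ n := fun h => h2 ⟨hc', h⟩
          omega
        · simp [hc, hc', h0 c hc']

/-! ### Covering relations in Young's lattice -/

/-- The rows of `μ` ending in a removable cell. -/
def removableRows (μ : YoungDiagram) : Finset ℕ :=
  (Finset.range (μ.colLen 0)).filter fun i => μ.rowLen (i + 1) < μ.rowLen i

theorem mem_removableRows {μ : YoungDiagram} {i : ℕ} :
    i ∈ removableRows μ ↔ μ.rowLen (i + 1) < μ.rowLen i := by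
  simp only [removableRows, Finset.mem_filter, Finset.mem_range, and_iff_right_iff_imp]
  intro h
  rw [← YoungDiagram.mem_iff_lt_colLen, YoungDiagram.mem_iff_lt_rowLen]
  omega

/-- The diagrams covered by `μ` arise by deleting the last cell of a removable row. -/
theorem card_down {m : ℕ} {μ : YoungDiagram} (hμ : μ.card = m + 1) [DecidablePred (· ≤ μ)] :
    ((diagrams m).filter (· ≤ μ)).card = (removableRows μ).card := by
  symm
  have hlow : ∀ i ∈ removableRows μ,
      IsLowerSet ((μ.cells.erase (i, μ.rowLen i - 1) : Finset (ℕ × ℕ)) : Set (ℕ × ℕ)) := by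
    rintro i hi ⟨a, b⟩ ⟨a', b'⟩ hle hc
    rw [mem_removableRows] at hi
    obtain ⟨h1, h2⟩ := Prod.mk_le_mk.1 hle
    simp only [Finset.coe_erase, Set.mem_sdiff, Finset.mem_coe, YoungDiagram.mem_cells,
      Set.mem_singleton_iff, Prod.mk.injEq] at hc ⊢
    refine ⟨μ.up_left_mem h1 h2 hc.1, ?_⟩
    rintro ⟨rfl, rfl⟩
    rcases h1.lt_or_eq with h1 | rfl
    · have := YoungDiagram.mem_iff_lt_rowLen.1 hc.1
      have := μ.rowLen_anti (a' + 1) a h1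
      omega
    · have := YoungDiagram.mem_iff_lt_rowLen.1 hc.1
      exact hc.2 ⟨rfl, by omega⟩
  have hin : ∀ i ∈ removableRows μ, (i, μ.rowLen i - 1) ∈ μ := by
    intro i hi
    rw [mem_removableRows] at hi
    rw [YoungDiagram.mem_iff_lt_rowLen]
    omega
  refine Finset.card_bij (fun i hi => ⟨μ.cells.erase (i, μ.rowLen i - 1), hlow i hi⟩) ?_ ?_ ?_
  · intro i hi
    simp only [Finset.mem_filter, mem_diagrams]
    constructor
    · have h1 : μ.cells.card = m + 1 := hμ
      simp only [YoungDiagram.card]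
      rw [Finset.card_erase_of_mem (hin i hi), h1]
      rfl
    · exact YoungDiagram.cells_subset_iff.1 (Finset.erase_subset _ _)
  · intro i hi k hk h
    have h1 := congrArg YoungDiagram.cells h
    simp only at h1
    have := (Finset.erase_inj _ (hin i hi)).1 h1
    exact (Prod.mk.inj this).1
  · intro κ hκ
    simp only [Finset.mem_filter, mem_diagrams] at hκ
    obtain ⟨hκ1, hκ2⟩ := hκ
    have hsub := YoungDiagram.cells_subset_iff.2 hκ2
    have h1 : (μ.cells \ κ.cells).card = 1 := by
      rw [Finset.card_sdiff_of_subset hsub]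
      simp only [YoungDiagram.card] at hκ1 hμ
      omega
    obtain ⟨⟨i, j⟩, hc⟩ := Finset.card_eq_one.1 h1
    have hc' : ∀ d, (d ∈ μ ∧ d ∉ κ) ↔ d = (i, j) := fun d => by
      have : d ∈ μ.cells \ κ.cells ↔ d ∈ ({(i, j)} : Finset _) := by rw [hc]
      simpa using this
    obtain ⟨hij, hij'⟩ := (hc' (i, j)).2 rfl
    -- cells of `μ` below or to the right of `(i, j)` would also be missing from `κ`
    have hmax : ∀ d ∈ μ, (i, j) ≤ d → d = (i, j) := fun d hd hle =>
      (hc' d).1 ⟨hd, fun h => hij' (κ.isLowerSet hle h)⟩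
    have hj : μ.rowLen i = j + 1 := by
      have h2 := YoungDiagram.mem_iff_lt_rowLen.1 hij
      by_contra h3
      have h4 : (i, j + 1) ∈ μ := YoungDiagram.mem_iff_lt_rowLen.2 (by omega)
      have := hmax _ h4 (by simp)
      simp at this
    have hi : i ∈ removableRows μ := by
      rw [mem_removableRows]
      by_contra h3
      have h4 : (i + 1, j) ∈ μ := YoungDiagram.mem_iff_lt_rowLen.2 (by omega)
      have := hmax _ h4 (by simp)
      simp at this
    refine ⟨i, hi, ?_⟩
    apply SetLike.ext
    intro d
    rw [← YoungDiagram.mem_cells]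
    simp only [hj, Nat.add_sub_cancel, Finset.mem_erase, YoungDiagram.mem_cells]
    have h5 := hc' d
    have h6 : d ∈ κ → d ∈ μ := fun h => hκ2 h
    tauto

/-- The diagrams covering `μ` arise by appending a cell to row `0`, or to the row just after a
removable one; hence there is one more of them than there are removable rows. -/
theorem card_up {n : ℕ} {μ : YoungDiagram} (hμ : μ.card = n) [DecidablePred (μ ≤ ·)] :
    ((diagrams (n + 1)).filter (μ ≤ ·)).card = (removableRows μ).card + 1 := by
  have hA : (insert 0 ((removableRows μ).image Nat.succ)).card = (removableRows μ).card + 1 := by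
    rw [Finset.card_insert_of_notMem (by simp), Finset.card_image_of_injective _ Nat.succ_injective]
  rw [← hA]
  symm
  have hAmem : ∀ i, i ∈ insert 0 ((removableRows μ).image Nat.succ) ↔
      ∀ k < i, μ.rowLen i < μ.rowLen k := by
    intro i
    rcases i with _ | i
    · simp
    · simp only [Finset.mem_insert, Finset.mem_image, Nat.succ_eq_add_one, Nat.add_right_cancel_iff,
        exists_eq_right, mem_removableRows, Nat.add_eq_zero_iff, one_ne_zero, and_false, false_or]
      constructor
      · intro h k hk
        exact h.trans_le (μ.rowLen_anti k i (by omega))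
      · intro h
        exact h i (by omega)
  have hlow : ∀ i ∈ insert 0 ((removableRows μ).image Nat.succ),
      IsLowerSet ((insert (i, μ.rowLen i) μ.cells : Finset (ℕ × ℕ)) : Set (ℕ × ℕ)) := by
    rintro i hi ⟨a, b⟩ ⟨a', b'⟩ hle hc
    rw [hAmem] at hi
    obtain ⟨h1, h2⟩ := Prod.mk_le_mk.1 hle
    simp only [Finset.coe_insert, Set.mem_insert_iff, Prod.mk.injEq, Finset.mem_coe,
      YoungDiagram.mem_cells] at hc ⊢
    rcases hc with ⟨rfl, rfl⟩ | hc
    · rcases h1.lt_or_eq with h1 | rfl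
      · exact Or.inr (YoungDiagram.mem_iff_lt_rowLen.2 (h2.trans_lt (hi a' h1)))
      · rcases h2.lt_or_eq with h2 | rfl
        · exact Or.inr (YoungDiagram.mem_iff_lt_rowLen.2 h2)
        · exact Or.inl ⟨rfl, rfl⟩
    · exact Or.inr (μ.up_left_mem h1 h2 hc)
  have hout : ∀ i, (i, μ.rowLen i) ∉ μ := fun i => by
    rw [YoungDiagram.mem_iff_lt_rowLen]
    omega
  refine Finset.card_bij (fun i hi => ⟨insert (i, μ.rowLen i) μ.cells, hlow i hi⟩) ?_ ?_ ?_
  · intro i hi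
    simp only [Finset.mem_filter, mem_diagrams]
    constructor
    · have h1 : μ.cells.card = n := hμ
      simp only [YoungDiagram.card]
      rw [Finset.card_insert_of_notMem (hout i), h1]
    · exact YoungDiagram.cells_subset_iff.1 (Finset.subset_insert _ _)
  · intro i hi k hk h
    have h1 := congrArg YoungDiagram.cells h
    simp only at h1
    have := (Finset.insert_inj (hout i)).1 h1
    exact (Prod.mk.inj this).1
  · intro ν hν
    simp only [Finset.mem_filter, mem_diagrams] at hν
    obtain ⟨hν1, hν2⟩ := hν
    have hsub := YoungDiagram.cells_subset_iff.2 hν2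
    have h1 : (ν.cells \ μ.cells).card = 1 := by
      rw [Finset.card_sdiff_of_subset hsub]
      simp only [YoungDiagram.card] at hν1 hμ
      omega
    obtain ⟨⟨i, j⟩, hc⟩ := Finset.card_eq_one.1 h1
    have hc' : ∀ d, (d ∈ ν ∧ d ∉ μ) ↔ d = (i, j) := fun d => by
      have : d ∈ ν.cells \ μ.cells ↔ d ∈ ({(i, j)} : Finset _) := by rw [hc]
      simpa using this
    obtain ⟨hij, hij'⟩ := (hc' (i, j)).2 rfl
    -- every cell strictly above or to the left of `(i, j)` already lies in `μ`
    have hmin : ∀ d, d ≤ (i, j) → d ≠ (i, j) → d ∈ μ := fun d hle hne => by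
      by_contra h
      exact hne ((hc' d).1 ⟨ν.isLowerSet hle hij, h⟩)
    have hj : μ.rowLen i = j := by
      apply le_antisymm
      · rw [YoungDiagram.mem_iff_lt_rowLen] at hij'
        omega
      · by_contra h3
        have := hmin (i, μ.rowLen i) (by simp; omega) (by simp; omega)
        exact hout i this
    have hi : i ∈ insert 0 ((removableRows μ).image Nat.succ) := by
      rw [hAmem]
      intro k hk
      rw [hj, ← YoungDiagram.mem_iff_lt_rowLen]
      exact hmin (k, j) (by simp; omega) (by simp; omega)
    refine ⟨i, hi, ?_⟩
    apply SetLike.ext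
    intro d
    rw [← YoungDiagram.mem_cells]
    simp only [hj, Finset.mem_insert, YoungDiagram.mem_cells]
    have h5 := hc' d
    have h6 : d ∈ μ → d ∈ ν := fun h => hν2 h
    tauto

theorem card_le_of_le {μ ν : YoungDiagram} (h : μ ≤ ν) : μ.card ≤ ν.card :=
  Finset.card_le_card (YoungDiagram.cells_subset_iff.2 h)

theorem eq_of_le_of_card_le {μ ν : YoungDiagram} (h : μ ≤ ν) (hc : ν.card ≤ μ.card) : μ = ν :=
  YoungDiagram.ext (Finset.eq_of_subset_of_card_le (YoungDiagram.cells_subset_iff.2 h) hc)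

open Classical in
/-- The commutation relation `DU - UD = 1` of Young's lattice, in terms of matrix entries. Off the
diagonal, the only candidates for a common cover and a common lower neighbour are `μ ⊔ ν` and
`μ ⊓ ν`, and `|μ ⊔ ν| + |μ ⊓ ν| = |μ| + |ν|`. -/
theorem card_common_up {m : ℕ} {μ ν : YoungDiagram} (hμ : μ.card = m + 1) (hν : ν.card = m + 1) :
    ((diagrams (m + 2)).filter fun l => μ ≤ l ∧ ν ≤ l).card
      = ((diagrams m).filter fun κ => κ ≤ μ ∧ κ ≤ ν).card + if ν = μ then 1 else 0 := by
  by_cases hne : ν = μ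
  · subst hne
    simp only [and_self, if_true]
    rw [card_up hμ, card_down hμ]
  rw [if_neg hne, add_zero]
  have hcards : (μ ⊔ ν).card + (μ ⊓ ν).card = (m + 1) + (m + 1) := by
    nth_rewrite 1 [← hμ]
    rw [← hν]
    exact Finset.card_union_add_card_inter μ.cells ν.cells
  have hsup : m + 1 < (μ ⊔ ν).card := by
    by_contra h
    have h1 : μ = μ ⊔ ν := eq_of_le_of_card_le le_sup_left (by omega)
    have h2 : ν = μ ⊔ ν := eq_of_le_of_card_le le_sup_right (by omega)
    exact hne (h2.trans h1.symm)
  have hup : ((diagrams (m + 2)).filter fun l => μ ≤ l ∧ ν ≤ l)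
      = if (μ ⊔ ν).card = m + 2 then {μ ⊔ ν} else ∅ := by
    ext l
    have hl : l.card = m + 2 → μ ≤ l → ν ≤ l → μ ⊔ ν = l := fun h1 h2 h3 =>
      eq_of_le_of_card_le (sup_le h2 h3) (by omega)
    split_ifs with h
    · simp only [Finset.mem_filter, mem_diagrams, Finset.mem_singleton]
      constructor
      · rintro ⟨h1, h2, h3⟩
        exact (hl h1 h2 h3).symm
      · rintro rfl
        exact ⟨h, le_sup_left, le_sup_right⟩
    · simp only [Finset.mem_filter, mem_diagrams, Finset.notMem_empty, iff_false]
      rintro ⟨h1, h2, h3⟩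
      exact h (by rw [hl h1 h2 h3, h1])
  have hdown : ((diagrams m).filter fun l => l ≤ μ ∧ l ≤ ν)
      = if (μ ⊓ ν).card = m then {μ ⊓ ν} else ∅ := by
    ext l
    have hl : l.card = m → l ≤ μ → l ≤ ν → l = μ ⊓ ν := fun h1 h2 h3 =>
      eq_of_le_of_card_le (le_inf h2 h3) (by omega)
    split_ifs with h
    · simp only [Finset.mem_filter, mem_diagrams, Finset.mem_singleton]
      constructor
      · rintro ⟨h1, h2, h3⟩
        exact hl h1 h2 h3
      · rintro rfl
        exact ⟨h, inf_le_left, inf_le_right⟩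
    · simp only [Finset.mem_filter, mem_diagrams, Finset.notMem_empty, iff_false]
      rintro ⟨h1, h2, h3⟩
      exact h (by rw [← hl h1 h2 h3, h1])
  rw [hup, hdown]
  have : (μ ⊔ ν).card = m + 2 ↔ (μ ⊓ ν).card = m := by omega
  simp only [this]
  split_ifs <;> simp

/-! ### The upward branching rule and the sum of squares -/

theorem eq_bot_of_card {μ : YoungDiagram} (h : μ.card = 0) : μ = ⊥ :=
  YoungDiagram.ext (Finset.card_eq_zero.1 h)

theorem fnum_bot : fnum ⊥ = 1 := by
  have : Subsingleton (SYT ⊥) := ⟨fun S T => Subtype.ext <| funext fun c => by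
    rw [S.2.1 c (YoungDiagram.notMem_bot c), T.2.1 c (YoungDiagram.notMem_bot c)]⟩
  have : Nonempty (SYT ⊥) := ⟨⟨fun _ => 0, fun _ _ => rfl,
    fun c hc => absurd hc (YoungDiagram.notMem_bot c),
    fun c hc => absurd hc (YoungDiagram.notMem_bot c),
    fun c hc => absurd hc (YoungDiagram.notMem_bot c)⟩⟩
  exact Nat.card_eq_one_iff_unique.2 ⟨inferInstance, inferInstance⟩

open Classical in
/-- Upward branching rule: the numbers `f^ν` over the covers `ν` of `μ` add up to
`(|μ| + 1) f^μ`. -/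
theorem sum_up (n : ℕ) : ∀ μ : YoungDiagram, μ.card = n →
    ∑ ν ∈ (diagrams (n + 1)).filter (μ ≤ ·), fnum ν = (n + 1) * fnum μ := by
  induction n with
  | zero =>
    intro μ hμ
    have h1 : ∀ ν ∈ (diagrams 1).filter (μ ≤ ·), fnum ν = 1 := by
      intro ν hν
      simp only [Finset.mem_filter, mem_diagrams] at hν
      have h2 : (diagrams 0).filter (· ≤ ν) = {⊥} := by
        ext κ
        simp only [Finset.mem_filter, mem_diagrams, Finset.mem_singleton]
        constructor
        · exact fun h => eq_bot_of_card h.1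
        · rintro rfl
          exact ⟨rfl, bot_le⟩
      rw [fnum_eq_sum hν.1, h2, Finset.sum_singleton, fnum_bot]
    rw [Finset.sum_congr rfl h1, Finset.sum_const, card_up hμ, eq_bot_of_card hμ, fnum_bot]
    have : removableRows ⊥ = ∅ := by
      ext i
      rw [mem_removableRows]
      have := YoungDiagram.notMem_bot (i, 0)
      rw [YoungDiagram.mem_iff_lt_rowLen] at this
      simp
      omega
    simp [this]
  | succ m ih =>
    intro μ hμ
    calc ∑ ν ∈ (diagrams (m + 2)).filter (μ ≤ ·), fnum ν
        = ∑ l ∈ (diagrams (m + 2)).filter (μ ≤ ·),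
            ∑ ν ∈ (diagrams (m + 1)).filter (· ≤ l), fnum ν :=
          Finset.sum_congr rfl fun l hl => fnum_eq_sum
            (mem_diagrams.1 (Finset.mem_filter.1 hl).1)
      _ = ∑ ν ∈ diagrams (m + 1),
            ∑ l ∈ (diagrams (m + 2)).filter (fun l => μ ≤ l ∧ ν ≤ l), fnum ν := by
          refine Finset.sum_comm' ?_
          intro l ν
          simp only [Finset.mem_filter]
          tauto
      _ = ∑ ν ∈ diagrams (m + 1),
            (∑ κ ∈ (diagrams m).filter (fun κ => κ ≤ μ ∧ κ ≤ ν), fnum ν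
              + if ν = μ then fnum ν else 0) := by
          refine Finset.sum_congr rfl fun ν hν => ?_
          rw [Finset.sum_const, Finset.sum_const, card_common_up hμ (mem_diagrams.1 hν)]
          split_ifs <;> simp [add_mul]
      _ = ∑ κ ∈ (diagrams m).filter (· ≤ μ),
            ∑ ν ∈ (diagrams (m + 1)).filter (κ ≤ ·), fnum ν + fnum μ := by
          rw [Finset.sum_add_distrib, Finset.sum_ite_eq', if_pos (mem_diagrams.2 hμ)]
          refine congrArg (· + fnum μ) (Finset.sum_comm' ?_)
          intro ν κ
          simp only [Finset.mem_filter]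
          tauto
      _ = ∑ κ ∈ (diagrams m).filter (· ≤ μ), (m + 1) * fnum κ + fnum μ := by
          refine congrArg (· + fnum μ) (Finset.sum_congr rfl fun κ hκ => ?_)
          exact ih κ (mem_diagrams.1 (Finset.mem_filter.1 hκ).1)
      _ = (m + 1 + 1) * fnum μ := by
          rw [← Finset.mul_sum, ← fnum_eq_sum hμ]
          ring

open Classical in
theorem sum_diagrams (n : ℕ) : ∑ μ ∈ diagrams n, fnum μ ^ 2 = n.factorial := by
  induction n with
  | zero =>
    have : diagrams 0 = {⊥} := by
      ext μ
      rw [mem_diagrams, Finset.mem_singleton]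
      exact ⟨eq_bot_of_card, by rintro rfl; rfl⟩
    simp [this, fnum_bot]
  | succ n ih =>
    calc ∑ ν ∈ diagrams (n + 1), fnum ν ^ 2
        = ∑ ν ∈ diagrams (n + 1), ∑ μ ∈ (diagrams n).filter (· ≤ ν), fnum ν * fnum μ := by
          refine Finset.sum_congr rfl fun ν hν => ?_
          rw [← Finset.mul_sum, ← fnum_eq_sum (mem_diagrams.1 hν), sq]
      _ = ∑ μ ∈ diagrams n, ∑ ν ∈ (diagrams (n + 1)).filter (μ ≤ ·), fnum ν * fnum μ := by
          refine Finset.sum_comm' ?_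
          intro ν μ
          simp only [Finset.mem_filter]
          tauto
      _ = ∑ μ ∈ diagrams n, (n + 1) * fnum μ ^ 2 := by
          refine Finset.sum_congr rfl fun μ hμ => ?_
          rw [← Finset.sum_mul, sum_up n μ (mem_diagrams.1 hμ)]
          ring
      _ = (n + 1).factorial := by
          rw [← Finset.mul_sum, ih, Nat.factorial_succ]

/-- The sum over all partitions `p` of `n` of `(f^p)²` equals `n!`. -/
theorem sum_syt_squared (n : ℕ) :
    ∑ p : Nat.Partition n, sytCount p ^ 2 = n.factorial := by
  classical
  rw [← sum_diagrams n, diagrams, Finset.sum_image fun p _ q _ h => diagramOf_injective n h]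
  exact Finset.sum_congr rfl fun p _ => by rw [sytCount_eq]
end

section
/- For partitions μ of k and ν of n-k and any partition λ of n, the Littlewood–Richardson coefficient satisfies (c^λ_{μν})² ≤ C(n,k). -/
/-- Semistandard Young tableaux of shape `p ⊢ n` with entries in `Fin m`:
weakly increasing along rows, strictly increasing down columns. -/
def SsytOf {n : ℕ} (p : Nat.Partition n) (m : ℕ) : Type :=
  {T : cellsOf p → Fin m //
    (∀ c d : cellsOf p, c.1.1 = d.1.1 → c.1.2 < d.1.2 → T c ≤ T d) ∧
    (∀ c d : cellsOf p, c.1.2 = d.1.2 → c.1.1 < d.1.1 → T c < T d)}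

noncomputable instance {n : ℕ} (p : Nat.Partition n) (m : ℕ) : Fintype (SsytOf p m) := by
  classical
  unfold SsytOf
  infer_instance

/-- The Schur polynomial `s_p(x_0,…,x_{m-1})`, the generating function of semistandard
Young tableaux of shape `p` with entries in `Fin m`. -/
noncomputable def schurPoly {n : ℕ} (p : Nat.Partition n) (m : ℕ) :
    MvPolynomial (Fin m) ℤ :=
  ∑ T : SsytOf p m, ∏ c : cellsOf p, MvPolynomial.X (T.1 c)

namespace LRBound
open MvPolynomial

/-! ### Alternants -/

/-- The monomial `x^α` in the variables `x_0, …, x_{n-1}`. -/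
noncomputable def mono (n : ℕ) (α : ℕ → ℕ) : MvPolynomial (Fin n) ℤ :=
  ∏ i : Fin n, X i ^ α i

/-- The alternant `det (x_i ^ α_j)`. -/
noncomputable def alt (n : ℕ) (α : ℕ → ℕ) : MvPolynomial (Fin n) ℤ :=
  Matrix.det (Matrix.of fun i j : Fin n => (X i : MvPolynomial (Fin n) ℤ) ^ α j)

/-- The staircase `δ = (n-1, n-2, …, 0)`. -/
def stair (n : ℕ) : ℕ → ℕ := fun i => n - 1 - i

/-- The exponent vector of `x^β`. -/
noncomputable def expo (n : ℕ) (β : ℕ → ℕ) : Fin n →₀ ℕ :=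
  Finsupp.equivFunOnFinite.symm fun i : Fin n => β i

lemma expo_inj {n : ℕ} {α β : ℕ → ℕ} : expo n α = expo n β ↔ ∀ i < n, α i = β i := by
  constructor
  · intro h i hi
    have := DFunLike.congr_fun h ⟨i, hi⟩
    simpa [expo] using this
  · intro h
    ext i
    simp [expo, h i i.2]

lemma mono_eq (n : ℕ) (α : ℕ → ℕ) : mono n α = monomial (expo n α) 1 := by
  rw [mono, MvPolynomial.monomial_eq, Finsupp.prod_fintype _ _ (by simp)]
  simp [expo]

lemma mono_add (n : ℕ) (α β : ℕ → ℕ) : mono n (α + β) = mono n α * mono n β := by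
  simp [mono, pow_add, Finset.prod_mul_distrib]

lemma alt_congr {n : ℕ} {α β : ℕ → ℕ} (h : ∀ i < n, α i = β i) : alt n α = alt n β := by
  unfold alt
  congr 1
  ext1 i j
  simp [h j j.2]

lemma alt_eq_sum (n : ℕ) (α : ℕ → ℕ) :
    alt n α = ∑ σ : Equiv.Perm (Fin n), (Equiv.Perm.sign σ : ℤ) • rename σ (mono n α) := by
  rw [alt, Matrix.det_apply]
  refine Finset.sum_congr rfl fun σ _ => ?_
  simp [mono, Units.smul_def]

lemma alt_swap {n p : ℕ} (hp : p + 1 < n) {α β : ℕ → ℕ} (h1 : β p = α (p + 1))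
    (h2 : β (p + 1) = α p) (h3 : ∀ i, i ≠ p → i ≠ p + 1 → β i = α i) :
    alt n β = - alt n α := by
  have hne : (⟨p, by omega⟩ : Fin n) ≠ ⟨p + 1, hp⟩ := by simp
  have := Matrix.det_permute' (Equiv.swap (⟨p, by omega⟩ : Fin n) ⟨p + 1, hp⟩)
    (Matrix.of fun i j : Fin n => (X i : MvPolynomial (Fin n) ℤ) ^ α j)
  rw [Equiv.Perm.sign_swap hne] at this
  have h4 : alt n β = Matrix.det ((Matrix.of fun i j : Fin n =>
      (X i : MvPolynomial (Fin n) ℤ) ^ α j).submatrix id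
        (Equiv.swap (⟨p, by omega⟩ : Fin n) ⟨p + 1, hp⟩)) := by
    unfold alt
    congr 1
    ext1 i j
    simp only [Matrix.of_apply, Matrix.submatrix_apply, id]
    congr 1
    by_cases e1 : j = ⟨p, by omega⟩
    · subst e1; simp [h1]
    · by_cases e2 : j = ⟨p + 1, hp⟩
      · subst e2; simp [h2]
      · rw [Equiv.swap_apply_of_ne_of_ne e1 e2]
        exact h3 _ (fun h => e1 (Fin.ext h)) (fun h => e2 (Fin.ext h))
  rw [h4, this]
  simp [alt]

lemma alt_eq_zero {n p : ℕ} (hp : p + 1 < n) {α : ℕ → ℕ} (h : α p = α (p + 1)) :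
    alt n α = 0 := by
  unfold alt
  refine Matrix.det_zero_of_column_eq (i := ⟨p, by omega⟩) (j := ⟨p + 1, hp⟩) (by simp) ?_
  intro k
  simp [h]

/-- Multiplying an alternant by a symmetric sum of monomials adds exponents. -/
lemma alt_mul_symm {n : ℕ} {ι : Type*} [Fintype ι] (w : ι → ℕ → ℕ)
    (hs : (∑ t, mono n (w t)).IsSymmetric) (α : ℕ → ℕ) :
    alt n α * ∑ t, mono n (w t) = ∑ t, alt n (α + w t) := by
  simp only [alt_eq_sum]
  rw [Finset.sum_mul, Finset.sum_comm]
  refine Finset.sum_congr rfl fun σ _ => ?_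
  conv_lhs => rw [← hs σ]
  rw [smul_mul_assoc, ← map_mul, Finset.mul_sum, map_sum, Finset.smul_sum]
  simp only [mono_add]

/-- For strictly decreasing exponents the alternants have distinct leading terms. -/
lemma coeff_alt {n : ℕ} {α β : ℕ → ℕ} (ha : ∀ p, p + 1 < n → α (p + 1) < α p)
    (hb : ∀ p, p + 1 < n → β (p + 1) < β p) :
    (alt n α).coeff (expo n β) = if ∀ i < n, α i = β i then 1 else 0 := by
  have anti : ∀ γ : ℕ → ℕ, (∀ p, p + 1 < n → γ (p + 1) < γ p) →
      StrictAnti fun i : Fin n => γ i := by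
    intro γ hγ i j hij
    obtain ⟨i, hi⟩ := i
    obtain ⟨j, hj⟩ := j
    simp only [Fin.mk_lt_mk] at hij ⊢
    induction j with
    | zero => omega
    | succ j ih =>
      have := hγ j hj
      rcases Nat.lt_succ_iff_lt_or_eq.1 hij with h | h
      · have := ih (by omega) h
        omega
      · subst h; exact this
  have hA := anti α ha
  have hB := anti β hb
  have hcoef : ∀ σ : Equiv.Perm (Fin n), (rename σ (mono n α)).coeff (expo n β) =
      if ∀ i : Fin n, β (σ i) = α i then 1 else 0 := by
    intro σ
    rw [mono_eq, rename_monomial, coeff_monomial]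
    congr 1
    rw [eq_iff_iff]
    constructor
    · intro h i
      have := DFunLike.congr_fun h (σ i)
      rw [Finsupp.mapDomain_apply σ.injective] at this
      simpa [expo] using this.symm
    · intro h
      ext i
      obtain ⟨i, rfl⟩ := σ.surjective i
      rw [Finsupp.mapDomain_apply σ.injective]
      simp [expo, h]
  have hone : ∀ σ : Equiv.Perm (Fin n), (∀ i : Fin n, β (σ i) = α i) → σ = 1 := by
    intro σ h
    have hm : StrictMono σ := by
      intro i j hij
      have h1 := hA hij
      simp only [← h] at h1
      exact hB.lt_iff_gt.1 h1
    have := Subsingleton.elim (hm.orderIsoOfSurjective σ σ.surjective) (OrderIso.refl _)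
    ext i
    have := DFunLike.congr_fun this i
    simpa using congrArg Fin.val this
  rw [alt_eq_sum, coeff_sum, Finset.sum_eq_single 1]
  · rw [coeff_smul, hcoef]
    simp only [Equiv.Perm.sign_one, Units.val_one, one_smul, Equiv.Perm.one_apply]
    congr 1
    rw [eq_iff_iff]
    exact ⟨fun h i hi => (h ⟨i, hi⟩).symm, fun h i => (h i i.2).symm⟩
  · intro σ _ hσ
    rw [coeff_smul, hcoef, if_neg fun h => hσ (hone σ h), smul_zero]
  · simp

/-! ### Gelfand–Tsetlin patterns and the symmetry of Schur polynomials -/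

/-- Gelfand–Tsetlin patterns of shape `r`: `a m i` is the number of entries `< m` in row `i`
of a semistandard tableau of shape `r` with entries in `{0, …, n-1}`. Consecutive levels
interlace, and the levels `m ≥ n` are constantly `r`. -/
def IsGT (n : ℕ) (r : ℕ → ℕ) (a : ℕ → ℕ → ℕ) : Prop :=
  (∀ i, a 0 i = 0) ∧ (∀ m i, n ≤ m → a m i = r i) ∧
    (∀ m i, a m i ≤ a (m + 1) i) ∧ (∀ m i, a (m + 1) (i + 1) ≤ a m i)

/-- The type of Gelfand–Tsetlin patterns of shape `r`. -/
abbrev GT (n : ℕ) (r : ℕ → ℕ) := {a : ℕ → ℕ → ℕ // IsGT n r a}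

/-- The size `∑ f_i` of a shape with at most `n` rows. -/
def sz (n : ℕ) (f : ℕ → ℕ) : ℕ := ∑ i ∈ Finset.range n, f i

/-- The number of cells of the shape `f` in columns `≥ j`. -/
def szFrom (n j : ℕ) (f : ℕ → ℕ) : ℕ := ∑ i ∈ Finset.range n, (f i - j)

/-- The number of cells of the shape `f` in columns `< j`. -/
def szBelow (n j : ℕ) (f : ℕ → ℕ) : ℕ := ∑ i ∈ Finset.range n, min (f i) j

/-- The weight of a pattern: `wt n a m` is the number of entries `m` of the tableau. Levels of a
pattern increase, so the subtraction does not truncate. -/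
def wt (n : ℕ) (a : ℕ → ℕ → ℕ) : ℕ → ℕ := fun m => sz n (a (m + 1)) - sz n (a m)

lemma sz_eq (n j : ℕ) (f : ℕ → ℕ) : sz n f = szBelow n j f + szFrom n j f := by
  rw [sz, szBelow, szFrom, ← Finset.sum_add_distrib]
  exact Finset.sum_congr rfl fun i _ => by omega

lemma szBelow_mono {n j : ℕ} {f g : ℕ → ℕ} (h : ∀ i, f i ≤ g i) :
    szBelow n j f ≤ szBelow n j g :=
  Finset.sum_le_sum fun i _ => by have := h i; omega

lemma szFrom_mono {n j : ℕ} {f g : ℕ → ℕ} (h : ∀ i, f i ≤ g i) :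
    szFrom n j f ≤ szFrom n j g :=
  Finset.sum_le_sum fun i _ => by have := h i; omega

lemma sz_mono {n : ℕ} {f g : ℕ → ℕ} (h : ∀ i, f i ≤ g i) : sz n f ≤ sz n g :=
  Finset.sum_le_sum fun i _ => h i

namespace IsGT
variable {n : ℕ} {r : ℕ → ℕ} {a : ℕ → ℕ → ℕ}

lemma mono' (h : IsGT n r a) {m m' : ℕ} (hm : m ≤ m') (i : ℕ) : a m i ≤ a m' i :=
  monotone_nat_of_le_succ (f := fun m => a m i) (fun m => h.2.2.1 m i) hm

lemma anti (h : IsGT n r a) (m i : ℕ) : a m (i + 1) ≤ a m i :=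
  (h.2.2.1 m (i + 1)).trans (h.2.2.2 m i)

lemma antitone (h : IsGT n r a) (m : ℕ) : Antitone (a m) :=
  antitone_nat_of_succ_le (h.anti m)

lemma eq_zero (h : IsGT n r a) {m i : ℕ} (hm : m ≤ i) : a m i = 0 := by
  induction m generalizing i with
  | zero => exact h.1 i
  | succ m ih =>
    obtain ⟨i, rfl⟩ : ∃ i', i = i' + 1 := ⟨i - 1, by omega⟩
    have := h.2.2.2 m i
    rw [ih (by omega)] at this
    omega

lemma le_shape (h : IsGT n r a) (m i : ℕ) : a m i ≤ r i := by
  rw [← h.2.1 (max m n) i (le_max_right _ _)]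
  exact h.mono' (le_max_left _ _) i

lemma shape_zero (h : IsGT n r a) {i : ℕ} (hi : n ≤ i) : r i = 0 := by
  rw [← h.2.1 n i le_rfl]; exact h.eq_zero hi

lemma shape_antitone (h : IsGT n r a) : Antitone r := by
  have := h.antitone n
  rwa [show a n = r from funext fun i => h.2.1 n i le_rfl] at this

lemma eq_zero_of_ge (h : IsGT n r a) (m : ℕ) {i : ℕ} (hi : n ≤ i) : a m i = 0 := by
  have := h.le_shape m i
  rw [h.shape_zero hi] at this
  omega

end IsGT

instance (n : ℕ) (r : ℕ → ℕ) : Finite (GT n r) := by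
  have : Function.Injective
      (fun (a : GT n r) (m : Fin n) (i : Fin n) =>
        (⟨a.1 m i, Nat.lt_succ_of_le (a.2.le_shape m i)⟩ : Fin (r i + 1))) := by
    intro a b hab
    apply Subtype.ext
    funext m i
    by_cases hi : i < n
    · by_cases hm : m < n
      · have := congrFun (congrFun hab ⟨m, hm⟩) ⟨i, hi⟩
        simpa using this
      · rw [a.2.2.1 m i (by omega), b.2.2.1 m i (by omega)]
    · rw [a.2.eq_zero_of_ge m (by omega), b.2.eq_zero_of_ge m (by omega)]
  exact Finite.of_injective _ this

noncomputable instance (n : ℕ) (r : ℕ → ℕ) : Fintype (GT n r) := Fintype.ofFinite _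

/-- The upper end of the interval in which `a (p+1) i` may move, the levels `p` (`x`) and
`p+2` (`y`) being fixed. -/
def upper (x y : ℕ → ℕ) (i : ℕ) : ℕ := if i = 0 then y 0 else min (y i) (x (i - 1))

/-- The Bender–Knuth involution on the entries `p`, `p+1` lying in columns `< j`, written on
patterns: each entry of level `p+1` that is at most `j` is reflected in the interval it may
move in, cut off at `j`. -/
def toggle (p j : ℕ) (a : ℕ → ℕ → ℕ) : ℕ → ℕ → ℕ := fun m i =>
  if m = p + 1 then
    if a (p + 1) i ≤ j then
      max (a p i) (a (p + 2) (i + 1)) + min j (upper (a p) (a (p + 2)) i) - a (p + 1) i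
    else a (p + 1) i
  else a m i

/-- Column `j` has no entry `p`. -/
def Free (p j : ℕ) (a : ℕ → ℕ → ℕ) : Prop := ∀ i, j < a (p + 1) i → j < a p i

lemma toggle_ne {p j m : ℕ} (a : ℕ → ℕ → ℕ) (h : m ≠ p + 1) : toggle p j a m = a m := by
  funext i; simp [toggle, h]

section
variable {n p j : ℕ} {r : ℕ → ℕ} {a : ℕ → ℕ → ℕ}

lemma lower_le (h : IsGT n r a) (p i : ℕ) :
    max (a p i) (a (p + 2) (i + 1)) ≤ a (p + 1) i :=
  max_le (h.2.2.1 p i) (h.2.2.2 (p + 1) i)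

lemma le_upper (h : IsGT n r a) (p i : ℕ) :
    a (p + 1) i ≤ upper (a p) (a (p + 2)) i := by
  unfold upper
  split_ifs with hi
  · subst hi; exact h.2.2.1 (p + 1) 0
  · refine le_min (h.2.2.1 (p + 1) i) ?_
    obtain ⟨i, rfl⟩ : ∃ i', i = i' + 1 := ⟨i - 1, by omega⟩
    exact h.2.2.2 p i

lemma toggle_mid (p j : ℕ) (a : ℕ → ℕ → ℕ) (i : ℕ) : toggle p j a (p + 1) i =
    if a (p + 1) i ≤ j then
      max (a p i) (a (p + 2) (i + 1)) + min j (upper (a p) (a (p + 2)) i) - a (p + 1) i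
    else a (p + 1) i := by simp [toggle]

lemma toggle_bounds (h : IsGT n r a) (p j i : ℕ) :
    max (a p i) (a (p + 2) (i + 1)) ≤ toggle p j a (p + 1) i ∧
      toggle p j a (p + 1) i ≤ upper (a p) (a (p + 2)) i := by
  have h1 := lower_le h p i
  have h2 := le_upper h p i
  rw [toggle_mid]
  split_ifs <;> omega

lemma toggle_le_iff (h : IsGT n r a) (p j i : ℕ) :
    toggle p j a (p + 1) i ≤ j ↔ a (p + 1) i ≤ j := by
  have h1 := lower_le h p i
  have h2 := le_upper h p i
  rw [toggle_mid]
  split_ifs <;> omega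

lemma toggle_isGT (h : IsGT n r a) (hp : p + 1 < n) (j : ℕ) : IsGT n r (toggle p j a) := by
  refine ⟨fun i => ?_, fun m i hm => ?_, fun m i => ?_, fun m i => ?_⟩
  · rw [toggle_ne a (by omega)]; exact h.1 i
  · rw [toggle_ne a (by omega)]; exact h.2.1 m i hm
  · have hb := toggle_bounds h p j i
    by_cases h1 : m = p + 1
    · subst h1
      rw [toggle_ne a (m := p + 1 + 1) (by omega)]
      refine hb.2.trans ?_
      unfold upper; split_ifs with hi
      · subst hi; rfl
      · exact min_le_left _ _
    · by_cases h2 : m = p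
      · subst h2
        rw [toggle_ne a (m := m) (by omega)]
        exact (le_max_left _ _).trans hb.1
      · rw [toggle_ne a (by omega), toggle_ne a (by omega)]; exact h.2.2.1 m i
  · by_cases h1 : m = p + 1
    · subst h1
      rw [toggle_ne a (m := p + 1 + 1) (by omega)]
      exact (le_max_right _ _).trans (toggle_bounds h p j i).1
    · by_cases h2 : m = p
      · subst h2
        rw [toggle_ne a (m := m) (by omega)]
        refine (toggle_bounds h m j (i + 1)).2.trans ?_
        simp [upper]
      · rw [toggle_ne a (by omega), toggle_ne a (by omega)]; exact h.2.2.2 m i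

lemma toggle_toggle (h : IsGT n r a) (p j : ℕ) : toggle p j (toggle p j a) = a := by
  funext m i
  by_cases hm : m = p + 1
  · subst hm
    have h1 := lower_le h p i
    have h2 := le_upper h p i
    have h3 := toggle_le_iff h p j i
    rw [toggle_mid, toggle_ne a (m := p) (by omega), toggle_ne a (m := p + 2) (by omega)]
    rw [toggle_mid] at h3 ⊢
    split_ifs at h3 ⊢ <;> omega
  · rw [toggle_ne _ hm, toggle_ne _ hm]

lemma toggle_sub {j' : ℕ} (h : IsGT n r a) (hj : j ≤ j') (m i : ℕ) :
    toggle p j a m i - j' = a m i - j' := by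
  by_cases hm : m = p + 1
  · subst hm
    have h1 := lower_le h p i
    have h2 := le_upper h p i
    rw [toggle_mid]
    split_ifs <;> omega
  · rw [toggle_ne _ hm]

lemma toggle_szFrom {j' : ℕ} (h : IsGT n r a) (hj : j ≤ j') (m : ℕ) :
    szFrom n j' (toggle p j a m) = szFrom n j' (a m) :=
  Finset.sum_congr rfl fun i _ => toggle_sub h hj m i

lemma sum_reflect (x y : ℕ → ℕ) (N : ℕ) :
    (∑ i ∈ Finset.range N, (max (x i) (y (i + 1)) + upper x y i)) + upper x y N =
      ∑ i ∈ Finset.range N, x i + ∑ i ∈ Finset.range (N + 1), y i := by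
  induction N with
  | zero => simp [upper]
  | succ N ih =>
    rw [Finset.sum_range_succ, Finset.sum_range_succ _ N, Finset.sum_range_succ y (N + 1)]
    have : upper x y (N + 1) = min (y (N + 1)) (x N) := by simp [upper]
    rw [this]
    omega

/-- The toggle exchanges the numbers of entries `p` and `p+1` in the columns `< j`. -/
lemma toggle_szBelow (h : IsGT n r a) (hf : Free p j a) :
    szBelow n j (toggle p j a (p + 1)) + szBelow n j (a (p + 1)) =
      szBelow n j (a p) + szBelow n j (a (p + 2)) := by
  have key := sum_reflect (fun i => min (a p i) j) (fun i => min (a (p + 2) i) j) n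
  have h0 : upper (fun i => min (a p i) j) (fun i => min (a (p + 2) i) j) n = 0 := by
    have := h.eq_zero_of_ge (p + 2) (le_refl n)
    unfold upper
    split_ifs with hn
    · subst hn; simp [this]
    · simp [this]
  rw [h0, Finset.sum_range_succ, h.eq_zero_of_ge (p + 2) (le_refl n)] at key
  simp only [szBelow]
  rw [← Finset.sum_add_distrib]
  refine Eq.trans (Finset.sum_congr rfl fun i _ => ?_) (key.trans (by simp))
  have h1 := lower_le h p i
  have h2 := le_upper h p i
  have h3 := h.2.2.1 p i
  have h4 := h.2.2.1 (p + 1) i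
  have h6 := h.2.2.2 (p + 1) i
  have h7 := hf i
  have h5 : i ≠ 0 → a (p + 1) i ≤ a p (i - 1) := by
    intro hi
    obtain ⟨i, rfl⟩ : ∃ i', i = i' + 1 := ⟨i - 1, by omega⟩
    exact h.2.2.2 p i
  rw [toggle_mid]
  simp only [upper] at h2 ⊢
  by_cases hi : i = 0
  · subst hi
    simp only [if_true] at h2 ⊢
    split_ifs <;> omega
  · have h5 := h5 hi
    simp only [hi, if_false] at h2 ⊢
    split_ifs <;> omega

/-- If column `j` has no entry `p` and the entries `p`, `p+1` in columns `≥ j`, shifted by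
`u`, `v`, are balanced, then the toggle exchanges the shifted weights at `p` and `p+1`. -/
lemma toggle_wt (h : IsGT n r a) (hf : Free p j a) {u v : ℕ}
    (hbal : v + szFrom n j (a (p + 2)) + szFrom n j (a p) = u + 2 * szFrom n j (a (p + 1))) :
    u + wt n (toggle p j a) p = v + wt n a (p + 1) ∧
      v + wt n (toggle p j a) (p + 1) = u + wt n a p := by
  have k := toggle_szBelow h hf
  have d := toggle_szFrom (p := p) h (le_refl j) (p + 1)
  have m1 := szBelow_mono (n := n) (j := j) (h.2.2.1 p)
  have m2 := szBelow_mono (n := n) (j := j) (h.2.2.1 (p + 1))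
  have m3 := szFrom_mono (n := n) (j := j) (h.2.2.1 p)
  have m4 := szFrom_mono (n := n) (j := j) (h.2.2.1 (p + 1))
  simp only [wt, sz_eq n j]
  rw [toggle_ne a (m := p) (by omega), toggle_ne a (m := p + 1 + 1) (by omega), d]
  simp only [show p + 1 + 1 = p + 2 from rfl] at *
  omega

lemma toggle_wt_ne {q : ℕ} (h1 : q ≠ p) (h2 : q ≠ p + 1) :
    wt n (toggle p j a) q = wt n a q := by
  simp only [wt]
  rw [toggle_ne a (m := q) (by omega), toggle_ne a (m := q + 1) (by omega)]

end

/-- The Schur polynomial of shape `r` as a sum over Gelfand–Tsetlin patterns. -/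
noncomputable def schurGT (n : ℕ) (r : ℕ → ℕ) : MvPolynomial (Fin n) ℤ :=
  ∑ a : GT n r, mono n (wt n a.1)

lemma schurGT_symm (n : ℕ) (r : ℕ → ℕ) : (schurGT n r).IsSymmetric := by
  intro σ
  cases n with
  | zero => rw [Subsingleton.elim σ 1]; exact rename_id_apply _
  | succ n =>
  have hσ : σ ∈ Submonoid.closure
      (Set.range fun i : Fin n => Equiv.swap i.castSucc i.succ) := by
    rw [Equiv.Perm.mclosure_swap_castSucc_succ]; trivial
  induction hσ using Submonoid.closure_induction with
  | one => exact rename_id_apply _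
  | mul s t _ _ hs ht =>
    rw [Equiv.Perm.coe_mul, ← rename_rename, ht, hs]
  | mem s hs =>
    obtain ⟨i, rfl⟩ := hs
    have hp : (i : ℕ) + 1 < n + 1 := by omega
    -- toggling all columns: no entry of a pattern exceeds `r 0`
    have hle : ∀ (a : GT (n + 1) r) m i, a.1 m i ≤ r 0 := fun a m i =>
      (a.2.le_shape m i).trans (a.2.shape_antitone (Nat.zero_le i))
    have hfree : ∀ a : GT (n + 1) r, Free i (r 0) a.1 := fun a k hk => by
      have := hle a (i + 1) k; omega
    have hz : ∀ (a : GT (n + 1) r) m, szFrom (n + 1) (r 0) (a.1 m) = 0 := fun a m =>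
      Finset.sum_eq_zero fun k _ => by have := hle a m k; omega
    let e : GT (n + 1) r ≃ GT (n + 1) r :=
      { toFun := fun a => ⟨toggle i (r 0) a.1, toggle_isGT a.2 hp _⟩
        invFun := fun a => ⟨toggle i (r 0) a.1, toggle_isGT a.2 hp _⟩
        left_inv := fun a => Subtype.ext (toggle_toggle a.2 _ _)
        right_inv := fun a => Subtype.ext (toggle_toggle a.2 _ _) }
    rw [schurGT, map_sum]
    refine Fintype.sum_equiv e _ _ fun a => ?_
    have hw := toggle_wt a.2 (hfree a) (u := 0) (v := 0) (by simp [hz])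
    simp only [mono, map_prod, map_pow, rename_X]
    refine Fintype.prod_equiv (Equiv.swap i.castSucc i.succ) _ _ fun k => ?_
    congr 1
    show wt _ _ _ = wt _ (toggle i (r 0) a.1) _
    by_cases h1 : k = i.castSucc
    · subst h1
      have := hw.2
      simp only [zero_add] at this
      rw [Equiv.swap_apply_left]
      simpa using this.symm
    · by_cases h2 : k = i.succ
      · subst h2
        have := hw.1
        simp only [zero_add] at this
        rw [Equiv.swap_apply_right]
        simpa using this.symm
      · rw [Equiv.swap_apply_of_ne_of_ne h1 h2, toggle_wt_ne]
        · exact fun h => h1 (Fin.ext (by simpa using h))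
        · exact fun h => h2 (Fin.ext (by simpa using h))

/-! ### Products of alternants with Schur polynomials and with `p_1` -/

/-- Adding the columns `≥ j` of the tableau to `ν` breaks the inequality between the rows
`p` and `p+1`. -/
def Bad (n : ℕ) (ν : ℕ → ℕ) (a : ℕ → ℕ → ℕ) (j p : ℕ) : Prop :=
  p + 1 < n ∧ ν p + 2 * szFrom n j (a (p + 1)) <
    ν (p + 1) + szFrom n j (a (p + 2)) + szFrom n j (a p)

/-- The tableau is `ν`-good (a Littlewood–Richardson tableau relative to `ν`): for every `j`,
adding the weight of its columns `≥ j` to `ν` gives a partition. -/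
def Good (n : ℕ) (ν : ℕ → ℕ) (a : ℕ → ℕ → ℕ) : Prop := ∀ j p, ¬ Bad n ν a j p

lemma szFrom_split (n j : ℕ) (f : ℕ → ℕ) : szFrom n j f =
    szFrom n (j + 1) f + ∑ i ∈ Finset.range n, if j < f i then 1 else 0 := by
  rw [szFrom, szFrom, ← Finset.sum_add_distrib]
  refine Finset.sum_congr rfl fun i _ => ?_
  split_ifs <;> omega

lemma szFrom_zero (n : ℕ) (f : ℕ → ℕ) : szFrom n 0 f = sz n f := by simp [szFrom, sz]

lemma wt_congr_ge {n : ℕ} {r : ℕ → ℕ} {a : ℕ → ℕ → ℕ} (h : IsGT n r a) {m : ℕ} (hm : n ≤ m) :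
    wt n a m = 0 := by
  have : a (m + 1) = a m := by
    funext i; rw [h.2.1 m i hm, h.2.1 (m + 1) i (by omega)]
  simp [wt, this]

/-- At the rightmost column `j` where goodness fails at `p`, the column has an entry `p+1`
but no entry `p`, and the inequality fails by exactly one. -/
lemma bad_last {n : ℕ} {ν r : ℕ → ℕ} {a : ℕ → ℕ → ℕ} (h : IsGT n r a) {j p : ℕ}
    (hb : Bad n ν a j p) (hmax : ¬ Bad n ν a (j + 1) p) :
    Free p j a ∧
      ν (p + 1) + szFrom n j (a (p + 2)) + szFrom n j (a p) =
        ν p + 1 + 2 * szFrom n j (a (p + 1)) := by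
  have hp := hb.1
  have hb2 := hb.2
  have hm2 : ¬ _ := fun h' => hmax ⟨hp, h'⟩
  rw [szFrom_split n j (a (p + 2)), szFrom_split n j (a (p + 1)), szFrom_split n j (a p)] at *
  have hle : ∀ i ∈ Finset.range n, (if j < a p i then 1 else 0) ≤
      (if j < a (p + 1) i then 1 else 0) := by
    intro i _
    have := h.2.2.1 p i
    split_ifs <;> omega
  have e1 := Finset.sum_le_sum hle
  have e2 : ∑ i ∈ Finset.range n, (if j < a (p + 2) i then 1 else 0) ≤
      (∑ i ∈ Finset.range n, if j < a (p + 1) i then 1 else 0) + 1 := by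
    obtain ⟨N, rfl⟩ : ∃ N, n = N + 1 := ⟨n - 1, by omega⟩
    rw [Finset.sum_range_succ', Finset.sum_range_succ _ N]
    have : ∑ i ∈ Finset.range N, (if j < a (p + 2) (i + 1) then 1 else 0) ≤
        ∑ i ∈ Finset.range N, (if j < a (p + 1) i then 1 else 0) := by
      refine Finset.sum_le_sum fun i _ => ?_
      have := h.2.2.2 (p + 1) i
      simp only [show p + 1 + 1 = p + 2 from rfl] at this
      split_ifs <;> omega
    split_ifs <;> omega
  have heq : ∑ i ∈ Finset.range n, (if j < a p i then 1 else 0) =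
      ∑ i ∈ Finset.range n, (if j < a (p + 1) i then 1 else 0) := by omega
  refine ⟨fun i hi => ?_, by omega⟩
  have := (Finset.sum_eq_sum_iff_of_le hle).1 heq
  by_cases hin : i < n
  · have := this i (Finset.mem_range.2 hin)
    rw [if_pos hi] at this
    by_contra hc
    simp [hc] at this
  · rw [h.eq_zero_of_ge (p + 1) (by omega)] at hi; omega

/-- The column of the last failure of goodness. -/
noncomputable def badCol (n : ℕ) (ν : ℕ → ℕ) (a : ℕ → ℕ → ℕ) : ℕ :=
  sSup {j | ∃ p, Bad n ν a j p}

/-- A row at which goodness fails in the column `badCol`. -/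
noncomputable def badRow (n : ℕ) (ν : ℕ → ℕ) (a : ℕ → ℕ → ℕ) : ℕ :=
  sInf {p | Bad n ν a (badCol n ν a) p}

lemma badCol_isGreatest {n : ℕ} {ν r : ℕ → ℕ} (hν : Antitone ν) {a : ℕ → ℕ → ℕ}
    (h : IsGT n r a) (hb : ¬ Good n ν a) :
    IsGreatest {j | ∃ p, Bad n ν a j p} (badCol n ν a) := by
  have hne : {j | ∃ p, Bad n ν a j p}.Nonempty := by
    unfold Good at hb; push Not at hb; exact hb
  have hbd : BddAbove {j | ∃ p, Bad n ν a j p} := by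
    refine ⟨r 0, ?_⟩
    rintro j ⟨p, hp, hlt⟩
    by_contra hc
    have hz : ∀ m, szFrom n j (a m) = 0 := fun m => Finset.sum_eq_zero fun k _ => by
      have := (h.le_shape m k).trans (h.shape_antitone (Nat.zero_le k)); omega
    rw [hz, hz, hz] at hlt
    have := hν (Nat.le_succ p)
    simp only [Nat.succ_eq_add_one] at this
    omega
  exact ⟨Nat.sSup_mem hne hbd, fun j hj => le_csSup hbd hj⟩

/-- Stembridge's theorem: in `a_{ν+δ} s_r` only the `ν`-good tableaux survive. The others are
cancelled by toggling the columns left of the last failure of goodness. -/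
theorem alt_mul_schur (n : ℕ) (r : ℕ → ℕ) {ν : ℕ → ℕ} (hν : Antitone ν)
    [DecidablePred fun a : GT n r => Good n ν a.1] :
    alt n (ν + stair n) * schurGT n r =
      ∑ a : GT n r with Good n ν a.1, alt n (ν + stair n + wt n a.1) := by
  rw [schurGT, alt_mul_symm _ (schurGT_symm n r)]
  rw [← Finset.sum_filter_add_sum_filter_not Finset.univ (fun a : GT n r => Good n ν a.1)]
  conv_rhs => rw [← add_zero (Finset.sum _ _)]
  congr 1
  have hrow : ∀ a : GT n r, ¬ Good n ν a.1 →
      Bad n ν a.1 (badCol n ν a.1) (badRow n ν a.1) := fun a ha =>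
    Nat.sInf_mem (s := {p | Bad n ν a.1 (badCol n ν a.1) p}) (badCol_isGreatest hν a.2 ha).1
  have hlast : ∀ a : GT n r, ¬ Good n ν a.1 → _ := fun a ha =>
    bad_last a.2 (hrow a ha) (fun hb => by
      have := (badCol_isGreatest hν a.2 ha).2 ⟨_, hb⟩; omega)
  -- the toggle does not change the columns which determine `badCol` and `badRow`
  have hBad : ∀ a : GT n r, ∀ p j j', j ≤ j' → ∀ q,
      (Bad n ν (toggle p j a.1) j' q ↔ Bad n ν a.1 j' q) := by
    intro a p j j' hj q
    unfold Bad
    rw [toggle_szFrom a.2 hj, toggle_szFrom a.2 hj, toggle_szFrom a.2 hj]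
  have hnot : ∀ a : GT n r, ¬ Good n ν a.1 → ∀ p,
      ¬ Good n ν (toggle p (badCol n ν a.1) a.1) := by
    intro a ha p hg
    exact hg _ _ ((hBad a p _ _ le_rfl _).2 (hrow a ha))
  have hcol : ∀ a : GT n r, ¬ Good n ν a.1 → ∀ p, p + 1 < n →
      badCol n ν (toggle p (badCol n ν a.1) a.1) = badCol n ν a.1 := by
    intro a ha p hp
    have g1 := badCol_isGreatest hν a.2 ha
    have g2 := badCol_isGreatest hν (toggle_isGT a.2 hp (badCol n ν a.1)) (hnot a ha p)
    apply le_antisymm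
    · by_contra hc
      obtain ⟨q, hq⟩ := g2.1
      have := g1.2 ⟨q, (hBad a p _ _ (by omega) q).1 hq⟩
      omega
    · exact g2.2 ⟨_, (hBad a p _ _ le_rfl _).2 (hrow a ha)⟩
  have hrow' : ∀ a : GT n r, ¬ Good n ν a.1 → ∀ p, p + 1 < n →
      badRow n ν (toggle p (badCol n ν a.1) a.1) = badRow n ν a.1 := by
    intro a ha p hp
    unfold badRow
    rw [hcol a ha p hp]
    congr 1
    ext q
    exact hBad a p _ _ le_rfl q
  refine Finset.sum_involution
    (fun a ha => ⟨toggle (badRow n ν a.1) (badCol n ν a.1) a.1,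
      toggle_isGT a.2 (hrow a (Finset.mem_filter.1 ha).2).1 _⟩) ?_ ?_ ?_ ?_
  · intro a ha
    have ha := (Finset.mem_filter.1 ha).2
    have hp := (hrow a ha).1
    obtain ⟨hf, hbal⟩ := hlast a ha
    set p := badRow n ν a.1
    have hst : stair n p = stair n (p + 1) + 1 := by unfold stair; omega
    obtain ⟨w1, w2⟩ := toggle_wt a.2 hf (u := ν p + stair n p)
      (v := ν (p + 1) + stair n (p + 1)) (by omega)
    show alt n (ν + stair n + wt n a.1) +
      alt n (ν + stair n + wt n (toggle p (badCol n ν a.1) a.1)) = 0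
    rw [alt_swap hp (α := ν + stair n + wt n a.1)
      (β := ν + stair n + wt n (toggle p (badCol n ν a.1) a.1)), add_neg_cancel]
    · simpa using w1
    · simpa using w2
    · intro i h1 h2
      simp [toggle_wt_ne h1 h2]
  · intro a ha hne heq
    have ha := (Finset.mem_filter.1 ha).2
    have hp := (hrow a ha).1
    obtain ⟨hf, hbal⟩ := hlast a ha
    set p := badRow n ν a.1 with hpdef
    have hst : stair n p = stair n (p + 1) + 1 := by unfold stair; omega
    obtain ⟨w1, w2⟩ := toggle_wt a.2 hf (u := ν p + stair n p)
      (v := ν (p + 1) + stair n (p + 1)) (by omega)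
    have heq := congrArg Subtype.val heq
    simp only at heq
    rw [heq] at w1
    exact hne (alt_eq_zero hp (by simpa using w1))
  · intro a ha
    have ha := (Finset.mem_filter.1 ha).2
    exact Finset.mem_filter.2 ⟨Finset.mem_univ _, hnot a ha _⟩
  · intro a ha
    have ha := (Finset.mem_filter.1 ha).2
    have hp := (hrow a ha).1
    apply Subtype.ext
    simp only
    rw [hrow' a ha _ hp, hcol a ha _ hp, toggle_toggle a.2]

lemma good_wt_anti {n : ℕ} {ν r : ℕ → ℕ} {a : ℕ → ℕ → ℕ} (h : IsGT n r a)
    (hg : Good n ν a) {p : ℕ} (hp : p + 1 < n) :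
    (ν + stair n + wt n a) (p + 1) < (ν + stair n + wt n a) p := by
  have h1 : ¬ _ := fun h' => hg 0 p ⟨hp, h'⟩
  have hst : stair n p = stair n (p + 1) + 1 := by unfold stair; omega
  have m1 := sz_mono (n := n) (h.2.2.1 p)
  have m2 := sz_mono (n := n) (h.2.2.1 (p + 1))
  simp only [szFrom_zero] at h1
  simp only [Pi.add_apply, wt]
  simp only [show p + 1 + 1 = p + 2 from rfl] at *
  omega

lemma shift_anti {n : ℕ} {ν : ℕ → ℕ} (hν : Antitone ν) {p : ℕ} (hp : p + 1 < n) :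
    (ν + stair n) (p + 1) < (ν + stair n) p := by
  have := hν (Nat.le_succ p)
  simp only [Pi.add_apply, stair, Nat.succ_eq_add_one] at *
  omega

/-- The coefficients of `a_{ν+δ} s_r` on alternants are non-negative. -/
lemma coeff_alt_mul_schur_nonneg (n : ℕ) (r : ℕ → ℕ) {ν l : ℕ → ℕ} (hν : Antitone ν)
    (hl : Antitone l) :
    0 ≤ (alt n (ν + stair n) * schurGT n r).coeff (expo n (l + stair n)) := by
  classical
  rw [alt_mul_schur n r hν, coeff_sum]
  refine Finset.sum_nonneg fun a ha => ?_
  rw [coeff_alt (fun p hp => good_wt_anti a.2 (Finset.mem_filter.1 ha).2 hp)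
    (fun p hp => shift_anti hl hp)]
  split_ifs <;> simp

/-- A partition with at most `n` parts, as a function on `ℕ`. -/
def IsPart (n : ℕ) (r : ℕ → ℕ) : Prop := Antitone r ∧ ∀ i, n ≤ i → r i = 0

lemma coeff_alt_part {n : ℕ} {κ l : ℕ → ℕ} (hκ : IsPart n κ) (hl : IsPart n l)
    [Decidable (κ = l)] :
    (alt n (κ + stair n)).coeff (expo n (l + stair n)) = if κ = l then 1 else 0 := by
  rw [coeff_alt (fun p hp => shift_anti hκ.1 hp) (fun p hp => shift_anti hl.1 hp)]
  congr 1
  rw [eq_iff_iff]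
  constructor
  · intro h
    funext i
    by_cases hi : i < n
    · simpa using h i hi
    · rw [hκ.2 i (by omega), hl.2 i (by omega)]
  · rintro rfl i _; rfl

lemma alt_stair_ne_zero (n : ℕ) : alt n (stair n) ≠ 0 := by
  classical
  intro h
  have h0 : IsPart n 0 := ⟨fun _ _ _ => le_rfl, fun _ _ => rfl⟩
  have := coeff_alt_part h0 h0
  rw [zero_add, h] at this
  simp at this

/-- The pattern of the superstandard tableau, whose row `i` consists of entries `i`. -/
def superstandard (r : ℕ → ℕ) : ℕ → ℕ → ℕ := fun m i => if i < m then r i else 0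

lemma superstandard_isGT {n : ℕ} {r : ℕ → ℕ} (hr : IsPart n r) :
    IsGT n r (superstandard r) := by
  refine ⟨fun i => by simp [superstandard], fun m i hm => ?_, fun m i => ?_, fun m i => ?_⟩
  · unfold superstandard
    split_ifs with h
    · rfl
    · exact (hr.2 i (by omega)).symm
  · unfold superstandard; split_ifs <;> omega
  · have := hr.1 (Nat.le_succ i)
    simp only [Nat.succ_eq_add_one] at this
    unfold superstandard; split_ifs <;> omega

lemma superstandard_succ {n : ℕ} (r : ℕ → ℕ) {m : ℕ} (hm : m < n) (j : ℕ) :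
    szFrom n j (superstandard r (m + 1)) = szFrom n j (superstandard r m) + (r m - j) := by
  have : r m - j = ∑ i ∈ Finset.range n, if i = m then r m - j else 0 := by
    rw [Finset.sum_ite_eq', if_pos (Finset.mem_range.2 hm)]
  rw [this, szFrom, szFrom, ← Finset.sum_add_distrib]
  refine Finset.sum_congr rfl fun i _ => ?_
  unfold superstandard
  by_cases him : i = m
  · subst him; simp
  · split_ifs <;> omega

lemma superstandard_good {n : ℕ} {r : ℕ → ℕ} (hr : IsPart n r) :
    Good n 0 (superstandard r) := by
  rintro j p ⟨hp, hlt⟩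
  rw [superstandard_succ r (m := p + 1) hp, superstandard_succ r (m := p) (by omega)] at hlt
  have := hr.1 (Nat.le_succ p)
  simp only [Nat.succ_eq_add_one, Pi.zero_apply] at *
  omega

lemma superstandard_wt {n : ℕ} (r : ℕ → ℕ) {m : ℕ} (hm : m < n) :
    wt n (superstandard r) m = r m := by
  have := superstandard_succ r hm 0
  rw [szFrom_zero, szFrom_zero] at this
  simp only [wt]; omega

/-- The superstandard tableau is the only `0`-good one: if row `i` is the first deviating one
and `j` its number of entries `≤ i`, the number of cells in columns `≥ j` does not grow from
level `i` to level `i+1`, hence by concavity never again, although row `i` must reach `r i`. -/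
lemma good_zero_unique {n : ℕ} {r : ℕ → ℕ} {a : ℕ → ℕ → ℕ} (h : IsGT n r a)
    (hg : Good n 0 a) : a = superstandard r := by
  have key : ∀ i m, i < m → m ≤ n → a m i = r i := by
    intro i
    induction i using Nat.strong_induction_on with
    | _ i ih =>
    suffices hs : i < n → r i ≤ a (i + 1) i by
      intro m him hmn
      exact le_antisymm (h.le_shape m i) ((hs (by omega)).trans (h.mono' him i))
    intro hin
    by_contra hc
    set j := a (i + 1) i with hj
    have hD : ∀ q, i ≤ q → q < n → szFrom n j (a (q + 1)) ≤ szFrom n j (a q) := by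
      intro q hiq
      induction q, hiq using Nat.le_induction with
      | base =>
        intro _
        refine Finset.sum_le_sum fun k _ => ?_
        rcases lt_trichotomy k i with hk | hk | hk
        · rw [ih k hk i hk hin.le, ih k hk (i + 1) (by omega) hin]
        · subst hk; omega
        · rw [h.eq_zero (m := i + 1) (i := k) hk]; omega
      | succ q hiq ihq =>
        intro hq
        have := ihq (by omega)
        have h1 : ¬ _ := fun h' => hg j q ⟨hq, h'⟩
        simp only [Pi.zero_apply] at h1
        simp only [show q + 1 + 1 = q + 2 from rfl] at *
        omega
    have hDn : ∀ q, i ≤ q → q ≤ n → szFrom n j (a q) ≤ szFrom n j (a i) := by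
      intro q hiq
      induction q, hiq using Nat.le_induction with
      | base => intro _; exact le_rfl
      | succ q hiq ihq => intro hq; exact (hD q hiq (by omega)).trans (ihq (by omega))
    have h1 := hDn n hin.le le_rfl
    have h2 : szFrom n j (a i) < szFrom n j (a n) := by
      refine Finset.sum_lt_sum (fun k _ => Nat.sub_le_sub_right (h.mono' hin.le k) j)
        ⟨i, Finset.mem_range.2 hin, ?_⟩
      rw [h.eq_zero (m := i) (i := i) le_rfl, h.2.1 n i le_rfl]
      omega
    omega
  funext m i
  unfold superstandard
  split_ifs with hi
  · by_cases hm : m ≤ n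
    · exact key i m hi hm
    · exact h.2.1 m i (by omega)
  · exact h.eq_zero (by omega)

/-- The bialternant formula `a_δ s_r = a_{r+δ}`. -/
theorem alt_stair_mul_schur {n : ℕ} {r : ℕ → ℕ} (hr : IsPart n r) :
    alt n (stair n) * schurGT n r = alt n (r + stair n) := by
  classical
  have h0 : Antitone (0 : ℕ → ℕ) := fun _ _ _ => le_rfl
  have := alt_mul_schur n r h0
  rw [zero_add] at this
  rw [this, Finset.sum_eq_single ⟨superstandard r, superstandard_isGT hr⟩]
  · refine alt_congr fun i hi => ?_
    simp [superstandard_wt r hi, add_comm]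
  · intro a ha hne
    exact absurd (Subtype.ext (good_zero_unique a.2 (Finset.mem_filter.1 ha).2)) hne
  · intro hne
    refine absurd (Finset.mem_filter.2 ⟨Finset.mem_univ _, ?_⟩) hne
    exact superstandard_good hr

/-- The power sum `p_1 = x_0 + ⋯ + x_{n-1}`. -/
noncomputable def p1 (n : ℕ) : MvPolynomial (Fin n) ℤ := ∑ i : Fin n, X i

/-- Adding a box to row `i`. -/
def addBox (ν : ℕ → ℕ) (i : ℕ) : ℕ → ℕ := ν + Pi.single i 1

/-- Pieri's rule for a single box. -/
lemma pieri {n : ℕ} {ν : ℕ → ℕ} (hν : Antitone ν)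
    [DecidablePred fun i => Antitone (addBox ν i)] :
    alt n (ν + stair n) * p1 n =
      ∑ i ∈ Finset.range n with Antitone (addBox ν i), alt n (addBox ν i + stair n) := by
  have hX : ∀ i : Fin n, mono n (Pi.single (i : ℕ) 1) = X i := by
    intro i
    rw [mono, Finset.prod_eq_single i]
    · simp
    · intro k _ hk
      rw [Pi.single_eq_of_ne (fun h => hk (Fin.ext h)), pow_zero]
    · simp
  have hs : (∑ i : Fin n, mono n (Pi.single (i : ℕ) 1)).IsSymmetric := by
    intro σ
    simp only [hX, map_sum, rename_X]
    exact Equiv.sum_comp σ _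
  have := alt_mul_symm _ hs (ν + stair n)
  simp only [hX] at this
  rw [p1, this, Finset.sum_filter, ← Fin.sum_univ_eq_sum_range
    (fun i => if Antitone (addBox ν i) then alt n (addBox ν i + stair n) else 0)]
  refine Finset.sum_congr rfl fun i _ => ?_
  split_ifs with ha
  · congr 1
    unfold addBox
    abel
  · -- the box cannot be added, so it sits directly below a row of the same length
    have : ∃ p, ¬ addBox ν i (p + 1) ≤ addBox ν i p := by
      by_contra hc
      push Not at hc
      exact ha (antitone_nat_of_succ_le hc)
    obtain ⟨p, hp⟩ := this
    have h1 := hν (Nat.le_succ p)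
    simp only [addBox, Pi.add_apply, Nat.succ_eq_add_one, Pi.single_apply] at hp h1
    have hpi : p + 1 = i := by
      by_contra hne
      rw [if_neg hne] at hp
      split_ifs at hp <;> omega
    have hin : p + 1 < n := by rw [hpi]; exact i.2
    refine alt_eq_zero hin ?_
    rw [if_pos hpi, if_neg (by omega)] at hp
    simp only [Pi.add_apply, stair, Pi.single_apply]
    rw [if_pos hpi, if_neg (by omega)]
    omega

/-! ### Partitions and semistandard tableaux -/

lemma lt_card_filter_range {P : ℕ → Prop} [DecidablePred P] {N : ℕ}
    (hd : ∀ i j, i ≤ j → P j → P i) (hN : ∀ i, P i → i < N) (i : ℕ) :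
    i < ((Finset.range N).filter P).card ↔ P i := by
  constructor
  · intro h
    by_contra hc
    have : (Finset.range N).filter P ⊆ Finset.range i := by
      intro k hk
      rw [Finset.mem_filter] at hk
      rw [Finset.mem_range]
      by_contra hik
      exact hc (hd i k (by omega) hk.2)
    have := Finset.card_le_card this
    rw [Finset.card_range] at this
    omega
  · intro h
    have : Finset.range (i + 1) ⊆ (Finset.range N).filter P := by
      intro k hk
      rw [Finset.mem_range] at hk
      have hk' := hd k i (by omega) h
      exact Finset.mem_filter.2 ⟨Finset.mem_range.2 (hN k hk'), hk'⟩
    have := Finset.card_le_card this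
    rwa [Finset.card_range] at this

/-- The length of column `j`. -/
def col {s : ℕ} (κ : Nat.Partition s) (j : ℕ) : ℕ := (κ.parts.filter fun a => j < a).card

lemma col_anti {s : ℕ} (κ : Nat.Partition s) {j j' : ℕ} (h : j ≤ j') : col κ j' ≤ col κ j :=
  Multiset.card_le_card (Multiset.monotone_filter_right _ fun _ hb => lt_of_le_of_lt h hb)

lemma part_le {s : ℕ} (κ : Nat.Partition s) {a : ℕ} (ha : a ∈ κ.parts) : a ≤ s := by
  have := Multiset.single_le_sum (fun _ _ => Nat.zero_le _) a ha
  rwa [κ.parts_sum] at this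

lemma sum_card_filter (s : ℕ) (M : Multiset ℕ) (h : ∀ a ∈ M, a ≤ s) :
    ∑ j ∈ Finset.range s, (M.filter fun a => j < a).card = M.sum := by
  induction M using Multiset.induction_on with
  | empty => simp
  | cons a M ih =>
    have e : ∀ j, ((a ::ₘ M).filter fun a => j < a).card =
        (if j < a then 1 else 0) + (M.filter fun a => j < a).card := by
      intro j
      by_cases hj : j < a
      · rw [Multiset.filter_cons_of_pos _ hj]; simp [hj, add_comm]
      · rw [Multiset.filter_cons_of_neg _ hj]; simp [hj]
    simp only [e]
    rw [Finset.sum_add_distrib, ih fun b hb => h b (Multiset.mem_cons_of_mem hb),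
      Multiset.sum_cons, ← Finset.card_filter]
    congr 1
    have ha := h a (Multiset.mem_cons_self a M)
    have : (Finset.range s).filter (fun j => j < a) = Finset.range a := by
      ext j; simp only [Finset.mem_filter, Finset.mem_range]; omega
    rw [this, Finset.card_range]

lemma sum_col {s : ℕ} (κ : Nat.Partition s) : ∑ j ∈ Finset.range s, col κ j = s := by
  have := sum_card_filter s κ.parts fun a ha => part_le κ ha
  rwa [κ.parts_sum] at this

lemma lt_of_col_pos {s : ℕ} (κ : Nat.Partition s) {j : ℕ} (h : 0 < col κ j) : j < s := by
  obtain ⟨a, ha⟩ := Multiset.card_pos_iff_exists_mem.1 h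
  rw [Multiset.mem_filter] at ha
  exact ha.2.trans_le (part_le κ ha.1)

lemma col_le {s : ℕ} (κ : Nat.Partition s) (j : ℕ) : col κ j ≤ s := by
  by_cases h : 0 < col κ j
  · have := Finset.single_le_sum (f := col κ) (fun _ _ => Nat.zero_le _)
      (Finset.mem_range.2 (lt_of_col_pos κ h))
    rwa [sum_col] at this
  · omega

lemma mem_cells {s : ℕ} (κ : Nat.Partition s) (i j : ℕ) :
    (i, j) ∈ cellsOf κ ↔ i < col κ j := by
  have h1 := col_le κ j
  unfold cellsOf
  rw [Finset.mem_filter, Finset.mem_product, Finset.mem_range, Finset.mem_range]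
  refine ⟨fun h => h.2, fun h => ?_⟩
  exact ⟨⟨h.trans_le h1, lt_of_col_pos κ (Nat.zero_lt_of_lt h)⟩, h⟩

/-- The length of row `i`. -/
def row {s : ℕ} (κ : Nat.Partition s) (i : ℕ) : ℕ :=
  ((Finset.range s).filter fun j => i < col κ j).card

lemma lt_row {s : ℕ} (κ : Nat.Partition s) (i j : ℕ) : j < row κ i ↔ i < col κ j :=
  lt_card_filter_range (P := fun j => i < col κ j)
    (fun _ _ h h' => lt_of_lt_of_le h' (col_anti κ h))
    (fun _ h => lt_of_col_pos κ (by omega)) j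

lemma row_isPart {s n : ℕ} (κ : Nat.Partition s) (hs : s ≤ n) : IsPart n (row κ) := by
  constructor
  · intro i i' h
    by_contra hc
    push Not at hc
    have := (lt_row κ i' _).1 hc
    have := (lt_row κ i (row κ i)).2 (by omega)
    omega
  · intro i hi
    by_contra hc
    have := (lt_row κ i 0).1 (by omega)
    have := col_le κ 0
    omega

lemma sz_row {s n : ℕ} (κ : Nat.Partition s) (hs : s ≤ n) : sz n (row κ) = s := by
  unfold sz row
  simp only [Finset.card_filter]
  rw [Finset.sum_comm]
  conv_rhs => rw [← sum_col κ]
  refine Finset.sum_congr rfl fun j _ => ?_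
  rw [← Finset.card_filter]
  have h1 := col_le κ j
  have : (Finset.range n).filter (fun i => i < col κ j) = Finset.range (col κ j) := by
    ext i; simp only [Finset.mem_filter, Finset.mem_range]; omega
  rw [this, Finset.card_range]

lemma count_succ (M : Multiset ℕ) (a : ℕ) :
    M.count (a + 1) + (M.filter fun b => a + 1 < b).card = (M.filter fun b => a < b).card := by
  induction M using Multiset.induction_on with
  | empty => simp
  | cons b M ih =>
    rcases lt_trichotomy b (a + 1) with h | h | h
    · rw [Multiset.filter_cons_of_neg _ (by omega), Multiset.filter_cons_of_neg _ (by omega),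
        Multiset.count_cons_of_ne (by omega), ih]
    · subst h
      rw [Multiset.filter_cons_of_neg _ (by omega), Multiset.filter_cons_of_pos _ (by omega),
        Multiset.count_cons_self, Multiset.card_cons]
      omega
    · rw [Multiset.filter_cons_of_pos _ (by omega), Multiset.filter_cons_of_pos _ (by omega),
        Multiset.count_cons_of_ne (by omega), Multiset.card_cons, Multiset.card_cons]
      omega

lemma row_injective {s : ℕ} : Function.Injective (row : Nat.Partition s → ℕ → ℕ) := by
  intro κ κ' h
  have hcol : ∀ j, col κ j = col κ' j := by
    intro j
    have h1 : ∀ i, i < col κ j ↔ i < col κ' j := by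
      intro i; rw [← lt_row, ← lt_row, h]
    have h2 := h1 (col κ j)
    have h3 := h1 (col κ' j)
    omega
  apply Nat.Partition.ext
  refine Multiset.ext.2 fun a => ?_
  cases a with
  | zero =>
    rw [Multiset.count_eq_zero_of_notMem fun h => absurd (κ.parts_pos h) (lt_irrefl _),
      Multiset.count_eq_zero_of_notMem fun h => absurd (κ'.parts_pos h) (lt_irrefl _)]
  | succ a =>
    have h1 := count_succ κ.parts a
    have h2 := count_succ κ'.parts a
    have h3 := hcol a
    have h4 := hcol (a + 1)
    unfold col at h3 h4
    omega

lemma exists_row {s n : ℕ} {r : ℕ → ℕ} (hr : IsPart n r) (hs : sz n r = s) :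
    ∃ κ : Nat.Partition s, row κ = r := by
  let M : Multiset ℕ := (Finset.range n).val.map r
  have hM : M.sum = s := hs
  let κ := Nat.Partition.ofSums s M hM
  refine ⟨κ, ?_⟩
  have hcol : ∀ j, col κ j = ((Finset.range n).filter fun i => j < r i).card := by
    intro j
    show (Multiset.filter _ (Multiset.filter _ M)).card = _
    rw [Multiset.filter_filter, Multiset.filter_congr (q := fun a => j < a)
      (fun a _ => by constructor <;> intro h <;> omega), Multiset.filter_map,
      Multiset.card_map]
    rfl
  have h1 : ∀ i j, j < row κ i ↔ j < r i := by
    intro i j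
    rw [lt_row, hcol, lt_card_filter_range (P := fun i => j < r i)
      (fun _ _ h h' => lt_of_lt_of_le h' (hr.1 h))]
    intro i hi
    by_contra hc
    rw [hr.2 i (by omega)] at hi
    omega
  funext i
  have h2 := h1 i (row κ i)
  have h3 := h1 i (r i)
  omega

section
variable {s n : ℕ} {κ : Nat.Partition s}

open Classical in
/-- The pattern of a semistandard tableau. -/
noncomputable def toGT (T : cellsOf κ → Fin n) : ℕ → ℕ → ℕ := fun m i =>
  ((Finset.range s).filter fun j =>
    ∃ h : (i, j) ∈ cellsOf κ, (T ⟨(i, j), h⟩ : ℕ) < m).card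

lemma cells_left {i j j' : ℕ} (h : j ≤ j') (h' : (i, j') ∈ cellsOf κ) :
    (i, j) ∈ cellsOf κ := by
  rw [mem_cells] at *
  exact h'.trans_le (col_anti κ h)

lemma lt_toGT (T : SsytOf κ n) (m i j : ℕ) :
    j < toGT T.1 m i ↔ ∃ h : (i, j) ∈ cellsOf κ, (T.1 ⟨(i, j), h⟩ : ℕ) < m := by
  classical
  unfold toGT
  refine lt_card_filter_range
    (P := fun j => ∃ h : (i, j) ∈ cellsOf κ, (T.1 ⟨(i, j), h⟩ : ℕ) < m) ?_ ?_ j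
  · rintro j j' hj ⟨h, hT⟩
    refine ⟨cells_left hj h, ?_⟩
    rcases hj.eq_or_lt with rfl | hj
    · exact hT
    · have := T.2.1 ⟨(i, j), cells_left hj.le h⟩ ⟨(i, j'), h⟩ rfl hj
      exact lt_of_le_of_lt this hT
  · rintro j ⟨h, _⟩
    rw [mem_cells] at h
    exact lt_of_col_pos κ (by omega)

lemma le_of_forall_lt' {x y : ℕ} (h : ∀ j, j < x → j < y) : x ≤ y := by
  by_contra hc
  have := h y (by omega)
  omega

lemma toGT_isGT (T : SsytOf κ n) : IsGT n (row κ) (toGT T.1) := by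
  refine ⟨fun i => ?_, fun m i hm => ?_, fun m i => ?_, fun m i => ?_⟩
  · refine Nat.le_zero.1 (le_of_forall_lt' fun j hj => ?_)
    obtain ⟨_, h⟩ := (lt_toGT T _ _ _).1 hj
    omega
  · apply le_antisymm
    · refine le_of_forall_lt' fun j hj => ?_
      obtain ⟨h, _⟩ := (lt_toGT T _ _ _).1 hj
      rwa [lt_row, ← mem_cells]
    · refine le_of_forall_lt' fun j hj => ?_
      rw [lt_row, ← mem_cells] at hj
      exact (lt_toGT T _ _ _).2 ⟨hj, (T.1 _).2.trans_le hm⟩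
  · refine le_of_forall_lt' fun j hj => ?_
    obtain ⟨h, h'⟩ := (lt_toGT T _ _ _).1 hj
    exact (lt_toGT T _ _ _).2 ⟨h, by omega⟩
  · refine le_of_forall_lt' fun j hj => ?_
    obtain ⟨h, h'⟩ := (lt_toGT T _ _ _).1 hj
    have hc : (i, j) ∈ cellsOf κ := by rw [mem_cells] at *; omega
    have := T.2.2 ⟨(i, j), hc⟩ ⟨(i + 1, j), h⟩ rfl (Nat.lt_succ_self i)
    rw [Fin.lt_def] at this
    exact (lt_toGT T _ _ _).2 ⟨hc, by omega⟩

/-- The entry at `(i, j)` of the tableau of a pattern: the number of `m` such that the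
entries `≤ m` in row `i` do not reach column `j`. -/
def entry (n : ℕ) (a : ℕ → ℕ → ℕ) (i j : ℕ) : ℕ :=
  ((Finset.range n).filter fun m => a (m + 1) i ≤ j).card

lemma entry_lt {a : ℕ → ℕ → ℕ} (h : IsGT n (row κ) a) {i j : ℕ} (hc : (i, j) ∈ cellsOf κ)
    (m : ℕ) : entry n a i j < m ↔ j < a m i := by
  rw [mem_cells, ← lt_row] at hc
  cases m with
  | zero => simp [h.1]
  | succ m =>
    have := lt_card_filter_range (P := fun m => a (m + 1) i ≤ j) (N := n)
      (fun m m' hm hj => (h.mono' (Nat.succ_le_succ hm) i).trans hj)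
      (fun m hm => by
        by_contra hn
        rw [h.2.1 (m + 1) i (by omega)] at hm
        omega) m
    unfold entry
    omega

lemma entry_lt_n {a : ℕ → ℕ → ℕ} (h : IsGT n (row κ) a) (c : cellsOf κ) :
    entry n a c.1.1 c.1.2 < n := by
  rw [entry_lt h c.2, h.2.1 n _ le_rfl, lt_row, ← mem_cells]
  exact c.2

/-- Semistandard tableaux correspond to Gelfand–Tsetlin patterns. -/
noncomputable def ssytEquiv (κ : Nat.Partition s) (n : ℕ) : SsytOf κ n ≃ GT n (row κ) where
  toFun T := ⟨toGT T.1, toGT_isGT T⟩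
  invFun a := ⟨fun c => ⟨entry n a.1 c.1.1 c.1.2, entry_lt_n a.2 c⟩, by
    constructor
    · rintro ⟨⟨i, j⟩, hc⟩ ⟨⟨i', j'⟩, hd⟩ (rfl : i = i') (hj : j < j')
      rw [Fin.le_def]
      have := (entry_lt a.2 hd _).1 (Nat.lt_succ_self _)
      exact Nat.lt_succ_iff.1 ((entry_lt a.2 hc _).2 (hj.trans this))
    · rintro ⟨⟨i, j⟩, hc⟩ ⟨⟨i', j'⟩, hd⟩ (rfl : j = j') (hi : i < i')
      rw [Fin.lt_def]
      have := (entry_lt a.2 hd _).1 (Nat.lt_succ_self _)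
      refine (entry_lt a.2 hc _).2 (this.trans_le ?_)
      exact ((a.2.antitone _) (Nat.succ_le_of_lt hi)).trans (a.2.2.2.2 _ i)⟩
  left_inv T := by
    apply Subtype.ext
    funext c
    obtain ⟨⟨i, j⟩, hc⟩ := c
    apply Fin.ext
    have h1 : ∀ m, entry n (toGT T.1) i j < m ↔ (T.1 ⟨(i, j), hc⟩ : ℕ) < m := by
      intro m
      rw [entry_lt (toGT_isGT T) hc, lt_toGT]
      exact ⟨fun ⟨_, h⟩ => h, fun h => ⟨hc, h⟩⟩
    have h2 := h1 (entry n (toGT T.1) i j)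
    have h3 := h1 (T.1 ⟨(i, j), hc⟩ : ℕ)
    show entry n (toGT T.1) i j = _
    omega
  right_inv a := by
    apply Subtype.ext
    funext m i
    apply le_antisymm
    · refine le_of_forall_lt' fun j hj => ?_
      obtain ⟨h, h'⟩ := (lt_toGT _ _ _ _).1 hj
      exact (entry_lt a.2 h m).1 h'
    · refine le_of_forall_lt' fun j hj => ?_
      have hc : (i, j) ∈ cellsOf κ := by
        rw [mem_cells, ← lt_row]; exact hj.trans_le (a.2.le_shape m i)
      exact (lt_toGT _ _ _ _).2 ⟨hc, (entry_lt a.2 hc m).2 hj⟩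

lemma card_lt_eq_sz (hs : s ≤ n) (T : cellsOf κ → Fin n) (m : ℕ) :
    (Finset.univ.filter fun c => (T c : ℕ) < m).card = sz n (toGT T m) := by
  classical
  unfold sz toGT
  have e : ∀ P : ℕ → Prop, ∀ [DecidablePred P], ((Finset.range s).filter P).card =
      ∑ j ∈ Finset.range s, if P j then 1 else 0 := fun P _ => Finset.card_filter P _
  simp only [e]
  rw [← Finset.sum_product', ← Finset.card_filter]
  refine Finset.card_bij (fun c _ => c.1) ?_ ?_ ?_
  · rintro ⟨⟨i, j⟩, hc⟩ h
    have hm := hc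
    rw [mem_cells] at hm
    have := col_le κ j
    refine Finset.mem_filter.2 ⟨Finset.mem_product.2 ⟨Finset.mem_range.2 ?_,
      Finset.mem_range.2 (lt_of_col_pos κ (Nat.zero_lt_of_lt hm))⟩, hc, (Finset.mem_filter.1 h).2⟩
    show i < n
    omega
  · intro c _ d _ h
    exact Subtype.ext h
  · rintro ⟨i, j⟩ h
    obtain ⟨hc, hT⟩ := (Finset.mem_filter.1 h).2
    exact ⟨⟨(i, j), hc⟩, Finset.mem_filter.2 ⟨Finset.mem_univ _, hT⟩, rfl⟩

lemma card_eq_wt (hs : s ≤ n) (T : cellsOf κ → Fin n) (v : Fin n) :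
    (Finset.univ.filter fun c => T c = v).card = wt n (toGT T) v := by
  rw [wt, ← card_lt_eq_sz hs, ← card_lt_eq_sz hs]
  have : (Finset.univ.filter fun c => (T c : ℕ) < v + 1) =
      (Finset.univ.filter fun c => (T c : ℕ) < v) ∪ Finset.univ.filter fun c => T c = v := by
    ext c
    simp only [Finset.mem_filter, Finset.mem_univ, true_and, Finset.mem_union, Fin.ext_iff]
    omega
  rw [this, Finset.card_union_of_disjoint, Nat.add_sub_cancel_left]
  rw [Finset.disjoint_filter]
  rintro c _ h rfl
  omega

theorem schurPoly_eq (κ : Nat.Partition s) (hs : s ≤ n) :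
    schurPoly κ n = schurGT n (row κ) := by
  unfold schurPoly schurGT
  refine Fintype.sum_equiv (ssytEquiv κ n) _ _ fun T => ?_
  show _ = mono n (wt n (toGT T.1))
  rw [mono, ← Finset.prod_fiberwise' Finset.univ T.1 (fun v => (X v : MvPolynomial (Fin n) ℤ))]
  refine Finset.prod_congr rfl fun v _ => ?_
  rw [Finset.prod_const, card_eq_wt hs]
end

/-! ### Iterating Pieri's rule -/

section
variable {n : ℕ}

lemma isPart_zero (n : ℕ) : IsPart n 0 := ⟨fun _ _ _ => le_rfl, fun _ _ => rfl⟩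

lemma sz_addBox (ν : ℕ → ℕ) {i : ℕ} (hi : i < n) : sz n (addBox ν i) = sz n ν + 1 := by
  unfold sz addBox
  simp only [Pi.add_apply]
  rw [Finset.sum_add_distrib]
  congr 1
  rw [Finset.sum_eq_single_of_mem i (Finset.mem_range.2 hi)
    fun j _ hj => Pi.single_eq_of_ne hj 1, Pi.single_eq_same]

lemma addBox_isPart {ν : ℕ → ℕ} (hν : IsPart n ν) {i : ℕ} (hi : i < n)
    (ha : Antitone (addBox ν i)) : IsPart n (addBox ν i) := by
  refine ⟨ha, fun j hj => ?_⟩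
  have h1 : j ≠ i := by omega
  simp [addBox, hν.2 j hj, h1]

lemma addBox_injective (ν : ℕ → ℕ) : Function.Injective (addBox ν) := by
  intro i j h
  have := congrFun h i
  by_contra hc
  simp [addBox, hc] at this

/-- Iterated Pieri rule. -/
lemma expand (k : ℕ) : ∀ {s : ℕ} {ν : ℕ → ℕ}, IsPart n ν → sz n ν + k = s → s ≤ n →
    ∃ c : Nat.Partition s → ℕ, alt n (ν + stair n) * p1 n ^ k =
      ∑ κ, C (c κ : ℤ) * alt n (row κ + stair n) := by
  classical
  induction k with
  | zero =>
    intro s ν hν hs hn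
    obtain ⟨κ, rfl⟩ := exists_row hν (by simpa using hs)
    refine ⟨fun κ' => if κ' = κ then 1 else 0, ?_⟩
    simp
  | succ k ih =>
    intro s ν hν hs hn
    have h1 : ∀ i, ∃ c : Nat.Partition s → ℕ, i < n → Antitone (addBox ν i) →
        alt n (addBox ν i + stair n) * p1 n ^ k =
          ∑ κ, C (c κ : ℤ) * alt n (row κ + stair n) := by
      intro i
      by_cases hi : i < n ∧ Antitone (addBox ν i)
      · obtain ⟨c, hc⟩ := ih (addBox_isPart hν hi.1 hi.2)
          (by rw [sz_addBox ν hi.1]; omega) hn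
        exact ⟨c, fun _ _ => hc⟩
      · exact ⟨0, fun h h' => absurd ⟨h, h'⟩ hi⟩
    choose c hc using h1
    refine ⟨fun κ => ∑ i ∈ Finset.range n with Antitone (addBox ν i), c i κ, ?_⟩
    rw [pow_succ', ← mul_assoc, pieri hν.1, Finset.sum_mul]
    simp only [Nat.cast_sum, map_sum, Finset.sum_mul]
    rw [Finset.sum_comm]
    refine Finset.sum_congr rfl fun i hi => ?_
    rw [Finset.mem_filter, Finset.mem_range] at hi
    exact hc i hi.1 hi.2

/-- The alternants `a_{κ+δ}` are linearly independent: each is detected by `x^(κ+δ)`. -/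
lemma coeff_sum_alt {s : ℕ} (hs : s ≤ n) (c : Nat.Partition s → ℤ) (l : Nat.Partition s) :
    (∑ κ, C (c κ) * alt n (row κ + stair n)).coeff (expo n (row l + stair n)) = c l := by
  classical
  rw [coeff_sum]
  simp only [coeff_C_mul, coeff_alt_part (row_isPart _ hs) (row_isPart l hs),
    row_injective.eq_iff]
  simp

/-- The coefficient of `x^(l+δ)`, and hence of `a_{l+δ}`, in `a_{ν+δ} p_1 ^ k`. For partitions
`ν` and `l` differing by `k` boxes, it is the number of ways of building `l` from `ν` by adding
the boxes one at a time. -/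
noncomputable def paths (n k : ℕ) (ν l : ℕ → ℕ) : ℤ :=
  (alt n (ν + stair n) * p1 n ^ k).coeff (expo n (l + stair n))

lemma expand_paths {k s : ℕ} {ν : ℕ → ℕ} (hν : IsPart n ν) (h : sz n ν + k = s) (hs : s ≤ n) :
    alt n (ν + stair n) * p1 n ^ k =
      ∑ κ : Nat.Partition s, C (paths n k ν (row κ)) * alt n (row κ + stair n) := by
  obtain ⟨c, hc⟩ := expand k hν h hs
  have : ∀ κ : Nat.Partition s, paths n k ν (row κ) = c κ := by
    intro κ
    rw [paths, hc, coeff_sum_alt hs fun κ => (c κ : ℤ)]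
  simp only [this]
  exact hc

lemma paths_nonneg {k s : ℕ} {ν : ℕ → ℕ} (hν : IsPart n ν) (h : sz n ν + k = s) (hs : s ≤ n)
    (l : Nat.Partition s) : 0 ≤ paths n k ν (row l) := by
  obtain ⟨c, hc⟩ := expand k hν h hs
  rw [paths, hc, coeff_sum_alt hs fun κ => (c κ : ℤ)]
  exact Int.natCast_nonneg _

lemma paths_add {k j s : ℕ} {ν : ℕ → ℕ} (hν : IsPart n ν) (h : sz n ν + k = s) (hs : s ≤ n)
    (l : ℕ → ℕ) :
    paths n (k + j) ν l = ∑ κ : Nat.Partition s, paths n k ν (row κ) * paths n j (row κ) l := by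
  rw [paths, pow_add, ← mul_assoc, expand_paths hν h hs, Finset.sum_mul, coeff_sum]
  refine Finset.sum_congr rfl fun κ _ => ?_
  rw [mul_assoc, coeff_C_mul]
  rfl

lemma sz_zero : sz n 0 = 0 := by simp [sz]

/-- `p_1 ^ k = ∑_κ f^κ s_κ`. -/
lemma p1_pow {k : ℕ} (hk : k ≤ n) :
    p1 n ^ k = ∑ κ : Nat.Partition k, C (paths n k 0 (row κ)) * schurGT n (row κ) := by
  apply mul_left_cancel₀ (alt_stair_ne_zero n)
  have := expand_paths (isPart_zero n) (by rw [sz_zero, zero_add]) hk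
  rw [zero_add] at this
  rw [this, Finset.mul_sum]
  refine Finset.sum_congr rfl fun κ _ => ?_
  rw [mul_left_comm, alt_stair_mul_schur (row_isPart κ hk)]

/-- Expanding `p_1 ^ k` in Schur polynomials, the term of `μ` bounds the whole from below because
no term contributes negatively. -/
lemma le_paths {k : ℕ} (hk : k ≤ n) (μ : Nat.Partition k) {ν l : ℕ → ℕ} (hν : Antitone ν)
    (hl : Antitone l) :
    paths n k 0 (row μ) *
      (alt n (ν + stair n) * schurGT n (row μ)).coeff (expo n (l + stair n)) ≤
      paths n k ν l := by
  conv_rhs => rw [paths, p1_pow hk, Finset.mul_sum, coeff_sum]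
  simp only [mul_left_comm _ (C _), coeff_C_mul]
  refine Finset.single_le_sum (f := fun κ : Nat.Partition k => paths n k 0 (row κ) *
      (alt n (ν + stair n) * schurGT n (row κ)).coeff (expo n (l + stair n)))
    (fun κ _ => mul_nonneg (paths_nonneg (isPart_zero n) (by rw [sz_zero, zero_add]) hk κ)
      (coeff_alt_mul_schur_nonneg n _ hν hl)) (Finset.mem_univ μ)

/-- `l` is obtained from `ν` by adding one box. -/
def Covers (n : ℕ) (ν l : ℕ → ℕ) : Prop := ∃ i < n, l = addBox ν i

open Classical in
lemma paths_one {ν l : ℕ → ℕ} (hν : IsPart n ν) (hl : IsPart n l) :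
    paths n 1 ν l = if Covers n ν l then 1 else 0 := by
  rw [paths, pow_one, pieri hν.1, coeff_sum]
  have : ∀ i ∈ (Finset.range n).filter fun i => Antitone (addBox ν i),
      (alt n (addBox ν i + stair n)).coeff (expo n (l + stair n)) =
        if addBox ν i = l then 1 else 0 := by
    intro i hi
    rw [Finset.mem_filter, Finset.mem_range] at hi
    exact coeff_alt_part (addBox_isPart hν hi.1 hi.2) hl
  rw [Finset.sum_congr rfl this]
  split_ifs with h
  · obtain ⟨i, hi, rfl⟩ := h
    rw [Finset.sum_eq_single i]
    · simp
    · intro j _ hj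
      rw [if_neg fun h => hj (addBox_injective ν h)]
    · intro hn
      exact absurd (Finset.mem_filter.2 ⟨Finset.mem_range.2 hi, hl.1⟩) hn
  · refine Finset.sum_eq_zero fun i hi => if_neg fun h' => h ?_
    rw [Finset.mem_filter, Finset.mem_range] at hi
    exact ⟨i, hi.1, h'.symm⟩

/-- Every nonempty partition covers a partition with one box fewer. -/
lemma exists_covers {k : ℕ} (hk : k + 1 ≤ n) (l : Nat.Partition (k + 1)) :
    ∃ κ : Nat.Partition k, Covers n (row κ) (row l) := by
  have hl := row_isPart l hk
  have hs := sz_row l hk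
  have h0 : 0 < row l 0 := by
    by_contra h
    have : sz n (row l) = 0 :=
      Finset.sum_eq_zero fun i _ => by have := hl.1 (Nat.zero_le i); omega
    omega
  -- the last nonzero row
  let i := Nat.findGreatest (fun i => 0 < row l i) n
  have hi : 0 < row l i := Nat.findGreatest_spec (P := fun i => 0 < row l i) (Nat.zero_le n) h0
  have hin : i < n := by
    by_contra h
    rw [hl.2 i (by omega)] at hi
    omega
  have hlast : ∀ j, i < j → row l j = 0 := by
    intro j hj
    by_cases hjn : j ≤ n
    · have := Nat.findGreatest_is_greatest hj hjn
      omega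
    · exact hl.2 j (by omega)
  let r := Function.update (row l) i (row l i - 1)
  have hr : row l = addBox r i := by
    funext j
    by_cases hj : j = i
    · subst hj; simp [addBox, r]; omega
    · simp [addBox, r, hj]
  have hrp : IsPart n r := by
    constructor
    · refine antitone_nat_of_succ_le fun j => ?_
      have h1 := hl.1 (Nat.le_succ j)
      simp only [r, Function.update_apply, Nat.succ_eq_add_one] at h1 ⊢
      have h2 := hlast (j + 1)
      have h3 : j + 1 = i → row l (j + 1) = row l i := fun h => by rw [h]
      split_ifs <;> omega
    · intro j hj
      have : j ≠ i := by omega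
      simp [r, this, hl.2 j hj]
  obtain ⟨κ, hκ⟩ := exists_row hrp (s := k) (by
    have := sz_addBox r hin
    rw [← hr] at this
    omega)
  exact ⟨κ, i, hin, by rw [hκ, hr]⟩

lemma paths_zero_zero : paths n 0 0 0 = 1 := by
  classical
  rw [paths, pow_zero, mul_one, coeff_alt_part (isPart_zero n) (isPart_zero n), if_pos rfl]

lemma row_eq_zero (l : Nat.Partition 0) : row l = 0 := by
  funext i
  simp [row]

open Classical in
lemma paths_succ {k : ℕ} (hk : k + 1 ≤ n) (l : Nat.Partition (k + 1)) :
    paths n (k + 1) 0 (row l) = ∑ κ : Nat.Partition k,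
      if Covers n (row κ) (row l) then paths n k 0 (row κ) else 0 := by
  rw [paths_add (isPart_zero n) (by rw [sz_zero, zero_add]) (by omega : k ≤ n)]
  refine Finset.sum_congr rfl fun κ _ => ?_
  rw [paths_one (row_isPart κ (by omega)) (row_isPart l hk)]
  split_ifs <;> simp

lemma paths_pos {k : ℕ} (hk : k ≤ n) (l : Nat.Partition k) : 0 < paths n k 0 (row l) := by
  classical
  induction k with
  | zero => rw [row_eq_zero, paths_zero_zero]; exact one_pos
  | succ k ih =>
    rw [paths_succ hk]
    obtain ⟨κ, hκ⟩ := exists_covers hk l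
    refine Finset.sum_pos' (fun κ _ => ?_) ⟨κ, Finset.mem_univ _, ?_⟩
    · split_ifs
      · exact (ih (by omega) κ).le
      · exact le_rfl
    · rw [if_pos hκ]
      exact ih (by omega) κ

end

/-! ### Standard patterns and squarefree coefficients -/

section
variable {n : ℕ}

/-- The standard patterns of shape `r` and size `k`: the first `k` levels add one box each. -/
noncomputable def std (n k : ℕ) (r : ℕ → ℕ) : Finset (ℕ → ℕ → ℕ) :=
  Set.Finite.toFinset (s := {a | IsGT n r a ∧ ∀ m, sz n (a m) = min m k})
    ((Set.finite_coe_iff.1 (inferInstanceAs (Finite (GT n r)))).subset (s := {a | IsGT n r a}) fun _ h => h.1)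

lemma mem_std {k : ℕ} {r : ℕ → ℕ} {a : ℕ → ℕ → ℕ} :
    a ∈ std n k r ↔ IsGT n r a ∧ ∀ m, sz n (a m) = min m k := by
  simp [std]

lemma eq_of_le_of_sz {f g : ℕ → ℕ} (h : ∀ i, f i ≤ g i) (hg : ∀ i, n ≤ i → g i = 0)
    (hs : sz n g ≤ sz n f) : f = g := by
  funext i
  by_cases hi : i < n
  · have := (Finset.sum_eq_sum_iff_of_le (s := Finset.range n) fun i _ => h i).1
      (le_antisymm (Finset.sum_le_sum fun i _ => h i) hs)
    exact this i (Finset.mem_range.2 hi)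
  · have := h i
    have := hg i (by omega)
    omega

/-- A shape contained in another one with one box more is covered by it. -/
lemma covers_of_le {f g : ℕ → ℕ} (h : ∀ i, f i ≤ g i) (hg : ∀ i, n ≤ i → g i = 0)
    (hs : sz n g = sz n f + 1) : Covers n f g := by
  have : ∃ i < n, f i < g i := by
    by_contra hc
    push Not at hc
    have : sz n g ≤ sz n f := Finset.sum_le_sum fun i hi => hc i (Finset.mem_range.1 hi)
    omega
  obtain ⟨i, hi, hfg⟩ := this
  refine ⟨i, hi, (eq_of_le_of_sz (n := n) ?_ hg ?_).symm⟩
  · intro j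
    by_cases hj : j = i
    · subst hj; simp [addBox]; omega
    · simp [addBox, hj, h j]
  · rw [sz_addBox f hi, hs]

lemma std_level {k : ℕ} {r : ℕ → ℕ} (hr : sz n r = k) {a : ℕ → ℕ → ℕ}
    (ha : a ∈ std n k r) {m : ℕ} (hm : k ≤ m) : a m = r := by
  rw [mem_std] at ha
  refine eq_of_le_of_sz (n := n) (ha.1.le_shape m) (fun i hi => ha.1.shape_zero hi) ?_
  rw [ha.2 m, hr]
  omega

/-- Restricting a standard pattern to its first `k` levels. -/
lemma restrict_mem {k : ℕ} (hk : k + 1 ≤ n) {r : ℕ → ℕ} {a : ℕ → ℕ → ℕ}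
    (ha : a ∈ std n (k + 1) r) : (fun m => a (min m k)) ∈ std n k (a k) := by
  rw [mem_std] at *
  refine ⟨⟨fun i => ?_, fun m i hm => ?_, fun m i => ?_, fun m i => ?_⟩, fun m => ?_⟩
  · simp [ha.1.1]
  · show a (min m k) i = a k i
    rw [min_eq_right (by omega)]
  · exact ha.1.mono' (by omega) i
  · show a (min (m + 1) k) (i + 1) ≤ a (min m k) i
    by_cases hm : m + 1 ≤ k
    · rw [min_eq_left hm, min_eq_left (by omega)]
      exact ha.1.2.2.2 m i
    · rw [min_eq_right (by omega), min_eq_right (by omega)]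
      exact ha.1.anti k i
  · rw [ha.2]
    omega

/-- Extending a standard pattern by one box. -/
lemma extend_mem {k : ℕ} (hk : k + 1 ≤ n) {r l : ℕ → ℕ} (hr : sz n r = k) (hl : IsPart n l)
    (hc : Covers n r l) {b : ℕ → ℕ → ℕ} (hb : b ∈ std n k r) :
    (fun m => if m ≤ k then b m else l) ∈ std n (k + 1) l := by
  have hbr : b k = r := std_level hr hb le_rfl
  rw [mem_std] at *
  obtain ⟨j, hj, rfl⟩ := hc
  refine ⟨⟨fun i => ?_, fun m i hm => ?_, fun m i => ?_, fun m i => ?_⟩, fun m => ?_⟩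
  · simp [hb.1.1]
  · show (if m ≤ k then b m else _) i = _
    rw [if_neg (by omega)]
  · show (if m ≤ k then b m else _) i ≤ (if m + 1 ≤ k then b (m + 1) else _) i
    rcases lt_trichotomy m k with h | rfl | h
    · rw [if_pos h.le, if_pos (by omega)]
      exact hb.1.2.2.1 m i
    · rw [if_pos le_rfl, if_neg (by omega), hbr]
      simp [addBox]
    · rw [if_neg (by omega), if_neg (by omega)]
  · show (if m + 1 ≤ k then b (m + 1) else _) (i + 1) ≤ (if m ≤ k then b m else _) i
    rcases lt_trichotomy m k with h | rfl | h
    · rw [if_pos h.le, if_pos (by omega)]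
      exact hb.1.2.2.2 m i
    · rw [if_pos le_rfl, if_neg (by omega), hbr]
      have h1 := hl.1 (Nat.le_succ i)
      have h2 := hb.1.shape_antitone (Nat.le_succ i)
      simp only [addBox, Pi.add_apply, Pi.single_apply, Nat.succ_eq_add_one] at *
      split_ifs at * <;> omega
    · rw [if_neg (by omega), if_neg (by omega)]
      exact hl.1 (Nat.le_succ i)
  · show sz n (if m ≤ k then b m else _) = _
    split_ifs with h
    · rw [hb.2]; omega
    · rw [sz_addBox r hj, hr]; omega

open Classical in
lemma card_std_succ {k : ℕ} (hk : k + 1 ≤ n) (l : Nat.Partition (k + 1)) :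
    (std n (k + 1) (row l)).card = ∑ κ : Nat.Partition k,
      if Covers n (row κ) (row l) then (std n k (row κ)).card else 0 := by
  have hl := row_isPart l hk
  have hmap : ∀ a ∈ std n (k + 1) (row l),
      a k ∈ (Finset.univ : Finset (Nat.Partition k)).image row := by
    intro a ha
    rw [mem_std] at ha
    obtain ⟨κ, hκ⟩ := exists_row (n := n) (s := k)
      ⟨ha.1.antitone k, fun i hi => ha.1.eq_zero_of_ge k hi⟩ (by rw [ha.2]; omega)
    exact Finset.mem_image.2 ⟨κ, Finset.mem_univ _, hκ⟩
  rw [Finset.card_eq_sum_card_fiberwise hmap, Finset.sum_image (row_injective.injOn)]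
  refine Finset.sum_congr rfl fun κ _ => ?_
  have hκ := sz_row κ (show k ≤ n by omega)
  split_ifs with hc
  · refine Finset.card_bij' (fun a _ m => a (min m k)) (fun b _ m => if m ≤ k then b m else row l)
      ?_ ?_ ?_ ?_
    · intro a ha
      rw [Finset.mem_filter] at ha
      rw [← ha.2]
      exact restrict_mem hk ha.1
    · intro b hb
      refine Finset.mem_filter.2 ⟨extend_mem hk hκ hl hc hb, ?_⟩
      show (if k ≤ k then b k else _) = _
      rw [if_pos le_rfl, std_level hκ hb le_rfl]
    · intro a ha
      rw [Finset.mem_filter] at ha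
      funext m
      show (if m ≤ k then a (min m k) else _) = _
      split_ifs with hm
      · rw [min_eq_left hm]
      · rw [std_level (sz_row l hk) ha.1 (by omega)]
    · intro b hb
      funext m
      show (if min m k ≤ k then b (min m k) else _) = _
      rw [if_pos (by omega)]
      by_cases hm : m ≤ k
      · rw [min_eq_left hm]
      · rw [min_eq_right (by omega), std_level hκ hb le_rfl, std_level hκ hb (by omega)]
  · rw [Finset.card_eq_zero, Finset.filter_eq_empty_iff]
    intro a ha hak
    have ha' := mem_std.1 ha
    refine hc (hak ▸ covers_of_le (ha'.1.le_shape k) hl.2 ?_)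
    rw [ha'.2, sz_row l hk]
    omega

/-- Both count standard tableaux of shape `l`. -/
lemma card_std_eq_paths {k : ℕ} (hk : k ≤ n) (l : Nat.Partition k) :
    ((std n k (row l)).card : ℤ) = paths n k 0 (row l) := by
  classical
  induction k with
  | zero =>
    rw [row_eq_zero, paths_zero_zero]
    have : std n 0 0 = {0} := by
      ext a
      rw [mem_std, Finset.mem_singleton]
      constructor
      · rintro ⟨h, _⟩
        funext m i
        exact Nat.le_zero.1 (h.le_shape m i)
      · rintro rfl
        refine ⟨⟨fun _ => rfl, fun _ _ _ => rfl, fun _ _ => le_rfl, fun _ _ => le_rfl⟩, ?_⟩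
        intro m
        simp [sz_zero]
    rw [this]
    simp
  | succ k ih =>
    rw [paths_succ hk, card_std_succ hk]
    push_cast
    refine Finset.sum_congr rfl fun κ _ => ?_
    rw [ih (by omega)]

lemma sum_wt {r : ℕ → ℕ} {a : ℕ → ℕ → ℕ} (h : IsGT n r a) (m : ℕ) :
    ∑ q ∈ Finset.range m, wt n a q = sz n (a m) := by
  induction m with
  | zero =>
    simp [sz, h.1]
  | succ m ih =>
    rw [Finset.sum_range_succ, ih, wt]
    have := sz_mono (n := n) (h.2.2.1 m)
    omega

/-- The indicator function of `{0, …, k-1}`. -/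
def ind (k : ℕ) : ℕ → ℕ := fun m => if m < k then 1 else 0

lemma sum_ind (k m : ℕ) : ∑ q ∈ Finset.range m, ind k q = min m k := by
  induction m with
  | zero => simp
  | succ m ih =>
    rw [Finset.sum_range_succ, ih, ind]
    split_ifs <;> omega

/-- Standard patterns are the ones of weight `x_0 ⋯ x_{k-1}`. -/
lemma mem_std_iff_wt {k : ℕ} (hk : k ≤ n) {r : ℕ → ℕ} (hr : sz n r = k) {a : ℕ → ℕ → ℕ}
    (ha : IsGT n r a) : a ∈ std n k r ↔ expo n (wt n a) = expo n (ind k) := by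
  rw [expo_inj, mem_std]
  constructor
  · rintro ⟨_, h⟩ i _
    rw [wt, h, h, ind]
    split_ifs <;> omega
  · intro h
    refine ⟨ha, fun m => ?_⟩
    by_cases hm : m ≤ n
    · rw [← sum_wt ha, ← sum_ind]
      refine Finset.sum_congr rfl fun q hq => h q ?_
      rw [Finset.mem_range] at hq
      omega
    · rw [show a m = r from funext fun i => ha.2.1 m i (by omega), hr]
      omega

lemma coeff_schurGT (r : ℕ → ℕ) (d : Fin n →₀ ℕ) [DecidableEq (Fin n →₀ ℕ)] :
    (schurGT n r).coeff d =
      ((Finset.univ.filter fun a : GT n r => expo n (wt n a.1) = d).card : ℤ) := by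
  rw [schurGT, coeff_sum, Finset.card_filter]
  push_cast
  refine Finset.sum_congr rfl fun a _ => ?_
  rw [mono_eq, coeff_monomial]
  split_ifs <;> rfl

lemma coeff_schurGT_nonneg (r : ℕ → ℕ) (d : Fin n →₀ ℕ) : 0 ≤ (schurGT n r).coeff d := by
  classical
  rw [coeff_schurGT]
  positivity

lemma coeff_ind {k : ℕ} (hk : k ≤ n) (l : Nat.Partition k) :
    (schurGT n (row l)).coeff (expo n (ind k)) = (std n k (row l)).card := by
  classical
  rw [coeff_schurGT]
  congr 1
  refine Finset.card_bij (fun a _ => a.1) ?_ ?_ ?_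
  · intro a ha
    exact (mem_std_iff_wt hk (sz_row l hk) a.2).2 (Finset.mem_filter.1 ha).2
  · intro a _ b _ h
    exact Subtype.ext h
  · intro a ha
    have ha' := (mem_std.1 ha).1
    exact ⟨⟨a, ha'⟩, Finset.mem_filter.2 ⟨Finset.mem_univ _,
      (mem_std_iff_wt hk (sz_row l hk) ha').1 ha⟩, rfl⟩

/-- By symmetry, every squarefree monomial of degree `k` occurs in `s_l` as often as
`x_0 ⋯ x_{k-1}`. -/
lemma coeff_squarefree {k : ℕ} (hk : k ≤ n) (l : Nat.Partition k) {d : Fin n →₀ ℕ}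
    (hd : ∀ i, d i ≤ 1) (hc : d.support.card = k) :
    (schurGT n (row l)).coeff d = paths n k 0 (row l) := by
  classical
  rw [← card_std_eq_paths hk, ← coeff_ind hk]
  have hcard : Fintype.card {i : Fin n // d i ≠ 0} = Fintype.card {i : Fin n // (i : ℕ) < k} := by
    rw [Fintype.card_subtype, Fintype.card_subtype, Fin.card_filter_val_lt, min_eq_right hk, ← hc]
    congr 1
    ext i
    simp
  let e := Fintype.equivOfCardEq hcard
  let σ : Equiv.Perm (Fin n) := e.extendSubtype
  have hσ : ∀ i, ((σ i : Fin n) : ℕ) < k ↔ d i ≠ 0 := by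
    intro i
    constructor
    · intro h
      by_contra h0
      exact e.extendSubtype_not_mem i (not_not.2 h0) h
    · exact e.extendSubtype_mem i
  have hm : d.mapDomain σ = expo n (ind k) := by
    rw [← Finsupp.equivMapDomain_eq_mapDomain]
    ext i
    rw [Finsupp.equivMapDomain_apply]
    have h1 := hσ (σ.symm i)
    have h2 := hd (σ.symm i)
    rw [Equiv.apply_symm_apply] at h1
    show _ = ind k i
    rw [ind]
    split_ifs with h
    · have := h1.1 h
      omega
    · by_contra h0
      exact h (h1.2 h0)
  rw [← hm, ← coeff_rename_mapDomain σ σ.injective, schurGT_symm n (row l) σ]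

lemma coeff_homogeneous {k : ℕ} (hk : k ≤ n) (l : Nat.Partition k) {d : Fin n →₀ ℕ}
    (hd : ∑ i, d i ≠ k) : (schurGT n (row l)).coeff d = 0 := by
  classical
  rw [coeff_schurGT, Nat.cast_eq_zero, Finset.card_eq_zero, Finset.filter_eq_empty_iff]
  rintro a _ rfl
  refine hd ?_
  have h1 := sum_wt a.2 n
  rw [show a.1 n = row l from funext fun i => a.2.2.1 n i le_rfl, sz_row l hk,
    ← Fin.sum_univ_eq_sum_range] at h1
  exact h1

/-- The coefficient of `x_0 ⋯ x_{n-1}` in `s_μ s_ν` is at most `C(n, k) f^μ f^ν`. -/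
lemma coeff_mul_le {k : ℕ} (hk : k ≤ n) (μ : Nat.Partition k) (ν : Nat.Partition (n - k)) :
    (schurGT n (row μ) * schurGT n (row ν)).coeff (expo n (ind n)) ≤
      n.choose k * (paths n k 0 (row μ) * paths n (n - k) 0 (row ν)) := by
  classical
  have hone : ∀ i, expo n (ind n) i = 1 := fun i => if_pos i.2
  rw [coeff_mul, ← Finset.sum_filter_add_sum_filter_not _
    (fun p : (Fin n →₀ ℕ) × (Fin n →₀ ℕ) => p.1.support.card = k)]
  have hsum : ∀ p ∈ Finset.HasAntidiagonal.antidiagonal (expo n (ind n)), ∀ i, p.1 i + p.2 i = 1 := by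
    intro p hp i
    rw [← hone i, ← Finset.HasAntidiagonal.mem_antidiagonal.1 hp, Finsupp.add_apply]
  have hdeg : ∀ p ∈ Finset.HasAntidiagonal.antidiagonal (expo n (ind n)), ∑ i, p.1 i = p.1.support.card := by
    intro p hp
    rw [Finset.card_eq_sum_ones, ← Finset.sum_subset (Finset.subset_univ p.1.support)]
    · refine Finset.sum_congr rfl fun i hi => ?_
      have := Finsupp.mem_support_iff.1 hi
      have := hsum p hp i
      omega
    · intro i _ hi
      exact Finsupp.notMem_support_iff.1 hi
  have h1 : ∀ p ∈ (Finset.HasAntidiagonal.antidiagonal (expo n (ind n))).filter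
      (fun p : (Fin n →₀ ℕ) × (Fin n →₀ ℕ) => p.1.support.card = k),
      (schurGT n (row μ)).coeff p.1 * (schurGT n (row ν)).coeff p.2 =
        paths n k 0 (row μ) * paths n (n - k) 0 (row ν) := by
    intro p hp
    obtain ⟨hp, hpk⟩ := Finset.mem_filter.1 hp
    have hs := hsum p hp
    rw [coeff_squarefree hk μ (fun i => by have := hs i; omega) hpk,
      coeff_squarefree (by omega) ν (fun i => by have := hs i; omega)]
    have : p.2.support = p.1.supportᶜ := by
      ext i
      have := hs i
      rw [Finset.mem_compl, Finsupp.mem_support_iff, Finsupp.mem_support_iff]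
      omega
    rw [this, Finset.card_compl, Fintype.card_fin, hpk]
  have h2 : ∀ p ∈ (Finset.HasAntidiagonal.antidiagonal (expo n (ind n))).filter
      (fun p : (Fin n →₀ ℕ) × (Fin n →₀ ℕ) => ¬ p.1.support.card = k),
      (schurGT n (row μ)).coeff p.1 * (schurGT n (row ν)).coeff p.2 = 0 := by
    intro p hp
    obtain ⟨hp, hpk⟩ := Finset.mem_filter.1 hp
    rw [coeff_homogeneous hk μ (by rwa [hdeg p hp]), zero_mul]
  rw [Finset.sum_congr rfl h1, Finset.sum_eq_zero h2, add_zero, Finset.sum_const, nsmul_eq_mul]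
  refine mul_le_mul_of_nonneg_right ?_
    (mul_nonneg (paths_pos hk μ).le (paths_pos (by omega) ν).le)
  rw [Nat.cast_le]
  calc _ ≤ (Finset.powersetCard k (Finset.univ : Finset (Fin n))).card := by
        refine Finset.card_le_card_of_injOn (fun p => p.1.support) ?_ ?_
        · intro p hp
          exact Finset.mem_coe.2 (Finset.mem_powersetCard.2
            ⟨Finset.subset_univ _, (Finset.mem_filter.1 hp).2⟩)
        · intro p hp q hq hpq
          have hp := hsum p (Finset.mem_filter.1 hp).1
          have hq := hsum q (Finset.mem_filter.1 hq).1
          have hpq : ∀ i, p.1 i ≠ 0 ↔ q.1 i ≠ 0 := by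
            intro i
            rw [← Finsupp.mem_support_iff, ← Finsupp.mem_support_iff]
            exact Finset.ext_iff.1 hpq i
          refine Prod.ext (Finsupp.ext fun i => ?_) (Finsupp.ext fun i => ?_) <;>
          · have h1 := hp i
            have h2 := hq i
            have h3 := hpq i
            omega
    _ = n.choose k := by rw [Finset.card_powersetCard, Finset.card_univ, Fintype.card_fin]

/-- `c^λ_{μν} f^λ ≤ C(n, k) f^μ f^ν`, and `c^λ_{μν} f^μ f^ν ≤ f^λ`. -/
lemma lr_bounds {k : ℕ} (hk : k ≤ n) (μ : Nat.Partition k) (ν : Nat.Partition (n - k))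
    (c : Nat.Partition n → ℕ)
    (hc : schurGT n (row μ) * schurGT n (row ν) =
      ∑ l : Nat.Partition n, C (c l : ℤ) * schurGT n (row l)) (l : Nat.Partition n) :
    (c l : ℤ) * paths n n 0 (row l) ≤
        n.choose k * (paths n k 0 (row μ) * paths n (n - k) 0 (row ν)) ∧
      (c l : ℤ) * (paths n k 0 (row μ) * paths n (n - k) 0 (row ν)) ≤ paths n n 0 (row l) := by
  constructor
  · refine le_trans ?_ (coeff_mul_le hk μ ν)
    rw [hc, coeff_sum]
    simp only [coeff_C_mul]
    rw [← card_std_eq_paths le_rfl, ← coeff_ind le_rfl]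
    exact Finset.single_le_sum
      (f := fun l : Nat.Partition n => (c l : ℤ) * (schurGT n (row l)).coeff (expo n (ind n)))
      (fun l _ => mul_nonneg (Int.natCast_nonneg _) (coeff_schurGT_nonneg _ _))
      (Finset.mem_univ l)
  · have hν := row_isPart ν (show n - k ≤ n by omega)
    have hl := row_isPart l le_rfl
    -- multiply by `a_δ` and read off the coefficient of `x^(l+δ)`
    have h1 : (alt n (row ν + stair n) * schurGT n (row μ)).coeff (expo n (row l + stair n)) =
        c l := by
      rw [← alt_stair_mul_schur hν, mul_assoc, mul_comm (schurGT n (row ν)), hc, Finset.mul_sum]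
      simp only [mul_left_comm _ (C _)]
      rw [Finset.sum_congr rfl fun κ _ => by rw [alt_stair_mul_schur (row_isPart κ le_rfl)]]
      exact coeff_sum_alt le_rfl (fun κ => (c κ : ℤ)) l
    have h2 := le_paths hk μ hν.1 hl.1
    rw [h1] at h2
    have h3 : paths n (n - k) 0 (row ν) * paths n k (row ν) (row l) ≤ paths n n 0 (row l) := by
      have h := paths_add (isPart_zero n) (by rw [sz_zero, zero_add]) (show n - k ≤ n by omega)
        (j := k) (row l)
      rw [Nat.sub_add_cancel hk] at h
      rw [h]
      refine Finset.single_le_sum (f := fun κ : Nat.Partition (n - k) =>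
        paths n (n - k) 0 (row κ) * paths n k (row κ) (row l)) (fun κ _ => ?_)
        (Finset.mem_univ ν)
      refine mul_nonneg (paths_pos (by omega) κ).le
        (paths_nonneg (row_isPart κ (by omega)) ?_ le_rfl l)
      rw [sz_row κ (by omega)]
      omega
    calc _ = paths n (n - k) 0 (row ν) * (paths n k 0 (row μ) * c l) := by ring
      _ ≤ _ := mul_le_mul_of_nonneg_left h2 (paths_pos (by omega) ν).le
      _ ≤ _ := h3

end

end LRBound

/-- For partitions `μ ⊢ k`, `ν ⊢ n-k`, `λ ⊢ n`, the Littlewood–Richardson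
coefficient (the structure constant in `s_μ s_ν = ∑_λ c^λ_{μν} s_λ`) satisfies
`(c^λ_{μν})² ≤ C(n,k)`. -/
theorem lr_coeff_sq_le_choose (n k : ℕ) (hk : k ≤ n)
    (μ : Nat.Partition k) (ν : Nat.Partition (n - k))
    (c : Nat.Partition n → ℕ)
    (hc : schurPoly μ n * schurPoly ν n =
      ∑ l : Nat.Partition n, MvPolynomial.C (c l : ℤ) * schurPoly l n) :
    ∀ l : Nat.Partition n, c l ^ 2 ≤ n.choose k := by
  intro l
  simp only [LRBound.schurPoly_eq _ hk, LRBound.schurPoly_eq _ (Nat.sub_le n k),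
    LRBound.schurPoly_eq _ le_rfl] at hc
  obtain ⟨h1, h2⟩ := LRBound.lr_bounds hk μ ν c hc l
  have hpos := mul_pos (LRBound.paths_pos hk μ) (LRBound.paths_pos (Nat.sub_le n k) ν)
  have h3 : (c l : ℤ) ^ 2 ≤ n.choose k := by
    refine le_of_mul_le_mul_right ?_ hpos
    rw [sq, mul_assoc]
    exact (mul_le_mul_of_nonneg_left h2 (Int.natCast_nonneg _)).trans h1
  exact_mod_cast h3
end
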